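/- arXiv:math/0406574 — 2 statements merged into one kernel-verified Lean document; each statement's English description precedes it below -/
import Mathlib

section
/- Let l ∈ ℕ be even. Then for every n ≥ 1, K^{B_n}_{(l,0,…,0),0}(q) = q^{l/2} · K^{C_n}_{(l,0,…,0),0}(q); and for every n ≥ 2, K^{D_n}_{(l,0,…,0),0}(q) = K^{B_{n−1}}_{(l,0,…,0),0}(q) = q^{l/2} · K^{C_{n−1}}_{(l,0,…,0),0}(q). Here (l,0,…,0) denotes the dominant weight of the appropriate rank whose largest coordinate is l and whose other coordinates are 0, and 0 denotes the zero weight. -/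
open scoped BigOperators

noncomputable section

/-- The `q`-analogue of Kostant's partition function attached to the finite set `R`
of positive roots: the coefficient of `q^k` is the number of families
`(m_α)_{α ∈ R}` of nonnegative integers with `∑ m_α = k` and `∑ m_α • α = β`. -/
def kostantQ {n : ℕ} (R : Finset (Fin n → ℚ)) (β : Fin n → ℚ) : PowerSeries ℤ :=
  PowerSeries.mk fun k =>
    (Nat.card {m : {α // α ∈ R} → ℕ //
      (∑ α, m α) = k ∧ (∑ α, (m α : ℚ) • (α : Fin n → ℚ)) = β} : ℤ)

/-- Positive roots of type `D_n` : `e_i - e_j` and `e_i + e_j` for `j < i`. -/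
def rootsD (n : ℕ) : Finset (Fin n → ℚ) :=
  ((Finset.univ : Finset (Fin n × Fin n)).filter fun p => p.2 < p.1).image
      (fun p => Pi.single p.1 (1 : ℚ) - Pi.single p.2 1) ∪
  ((Finset.univ : Finset (Fin n × Fin n)).filter fun p => p.2 < p.1).image
      (fun p => Pi.single p.1 (1 : ℚ) + Pi.single p.2 1)

/-- Positive roots of type `B_n`. -/
def rootsB (n : ℕ) : Finset (Fin n → ℚ) :=
  rootsD n ∪ (Finset.univ : Finset (Fin n)).image fun i => Pi.single i (1 : ℚ)

/-- Positive roots of type `C_n`. -/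
def rootsC (n : ℕ) : Finset (Fin n → ℚ) :=
  rootsD n ∪ (Finset.univ : Finset (Fin n)).image fun i => Pi.single i (2 : ℚ)

/-- Positive roots of type `A_{n-1}` : `e_i - e_j` for `j < i`. -/
def rootsA (n : ℕ) : Finset (Fin n → ℚ) :=
  ((Finset.univ : Finset (Fin n × Fin n)).filter fun p => p.2 < p.1).image
      fun p => Pi.single p.1 (1 : ℚ) - Pi.single p.2 1

/-- `ρ` of type `B_n` : `e_i`-coordinate `i - 1/2` (`0`-based index `i ↦ i + 1/2`). -/
def rhoB (n : ℕ) : Fin n → ℚ := fun i => ((i : ℕ) : ℚ) + 1/2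

/-- `ρ` of type `C_n` : `e_i`-coordinate `i`. -/
def rhoC (n : ℕ) : Fin n → ℚ := fun i => ((i : ℕ) : ℚ) + 1

/-- `ρ` of type `D_n` : `e_i`-coordinate `i - 1`. -/
def rhoD (n : ℕ) : Fin n → ℚ := fun i => ((i : ℕ) : ℚ)

/-- `ρ` of type `A_{n-1}` : `e_i`-coordinate `i - 1`. -/
def rhoA (n : ℕ) : Fin n → ℚ := fun i => ((i : ℕ) : ℚ)

/-- The signed permutation `(σ, ε)` acting on a weight: it maps `e_j` to `± e_{σ j}`. -/
def wAct {n : ℕ} (σ : Equiv.Perm (Fin n)) (ε : Fin n → Bool) (β : Fin n → ℚ) :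
    Fin n → ℚ := fun i => (if ε i then -1 else 1) * β (σ⁻¹ i)

/-- The determinant (sign) of the signed permutation `(σ, ε)`. -/
def wDet {n : ℕ} (σ : Equiv.Perm (Fin n)) (ε : Fin n → Bool) : ℤ :=
  (Equiv.Perm.sign σ : ℤ) * ∏ i, (if ε i then (-1 : ℤ) else 1)

/-- Kostka-Foulkes polynomial of type `B_n`, as a power series in `q`. -/
def KB (n : ℕ) (lam mu : Fin n → ℚ) : PowerSeries ℤ :=
  ∑ σ : Equiv.Perm (Fin n), ∑ ε : Fin n → Bool,
    wDet σ ε • kostantQ (rootsB n) (wAct σ ε (lam + rhoB n) - (mu + rhoB n))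

/-- Kostka-Foulkes polynomial of type `C_n`, as a power series in `q`. -/
def KC (n : ℕ) (lam mu : Fin n → ℚ) : PowerSeries ℤ :=
  ∑ σ : Equiv.Perm (Fin n), ∑ ε : Fin n → Bool,
    wDet σ ε • kostantQ (rootsC n) (wAct σ ε (lam + rhoC n) - (mu + rhoC n))

/-- Kostka-Foulkes polynomial of type `D_n`, as a power series in `q` (the Weyl group
consists of the signed permutations with an even number of sign changes). -/
def KD (n : ℕ) (lam mu : Fin n → ℚ) : PowerSeries ℤ :=
  ∑ σ : Equiv.Perm (Fin n), ∑ ε : Fin n → Bool,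
    if (∏ i, (if ε i then (-1 : ℤ) else 1)) = 1 then
      wDet σ ε • kostantQ (rootsD n) (wAct σ ε (lam + rhoD n) - (mu + rhoD n))
    else 0

/-- Kostka-Foulkes polynomial of type `A_{n-1}`, as a power series in `q`. -/
def KA (n : ℕ) (lam mu : Fin n → ℚ) : PowerSeries ℤ :=
  ∑ σ : Equiv.Perm (Fin n),
    (Equiv.Perm.sign σ : ℤ) •
      kostantQ (rootsA n) ((fun i => (lam + rhoA n) (σ⁻¹ i)) - (mu + rhoA n))

/-- Dominant weight of type `B_n` : `λ_n ≥ ⋯ ≥ λ_1 ≥ 0`, all coordinates in `ℤ`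
or all in `ℤ + 1/2`. -/
def DominantB {n : ℕ} (lam : Fin n → ℚ) : Prop :=
  Monotone lam ∧ (∀ i, 0 ≤ lam i) ∧
    ((∀ i, ∃ z : ℤ, lam i = z) ∨ (∀ i, ∃ z : ℤ, lam i = z + 1/2))

/-- Dominant weight of type `C_n` : `λ_n ≥ ⋯ ≥ λ_1 ≥ 0`, integer coordinates. -/
def DominantC {n : ℕ} (lam : Fin n → ℚ) : Prop :=
  Monotone lam ∧ (∀ i, 0 ≤ lam i) ∧ ∀ i, ∃ z : ℤ, lam i = z

/-- Dominant weight of type `D_n` : `λ_n ≥ ⋯ ≥ λ_2 ≥ |λ_1|`, all coordinates in `ℤ`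
or all in `ℤ + 1/2`. -/
def DominantD {n : ℕ} (lam : Fin n → ℚ) : Prop :=
  (∀ i j : Fin n, i ≤ j → 0 < (i : ℕ) → lam i ≤ lam j) ∧
  (∀ h : 0 < n, ∀ j : Fin n, 0 < (j : ℕ) → |lam ⟨0, h⟩| ≤ lam j) ∧
  ((∀ i, ∃ z : ℤ, lam i = z) ∨ (∀ i, ∃ z : ℤ, lam i = z + 1/2))

/-- Restriction of a weight of rank `n` to the first `n - 1` coordinates
(i.e. forgetting the `e_n`-coordinate). -/
def restrict1 {n : ℕ} (lam : Fin n → ℚ) : Fin (n - 1) → ℚ :=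
  fun i => lam ⟨(i : ℕ), by have := i.2; omega⟩

/-- Pieri number `b^λ_{γ,r}` of type `B_n`. -/
def bPieri {m : ℕ} (γ lam : Fin m → ℚ) (r : ℕ) : ℕ :=
  Nat.card {t : (Fin m → ℕ) × (Fin m → ℕ) × Bool //
    ((cond t.2.2 1 0) + ∑ i, (t.1 i + t.2.1 i)) = r ∧
    (∀ i, ((t.2.1 i : ℚ) - (t.1 i : ℚ)) = lam i - γ i) ∧
    (∀ i : Fin m, ∀ h : (i : ℕ) + 1 < m,
      lam i ≤ lam ⟨(i : ℕ) + 1, h⟩ - (t.2.1 ⟨(i : ℕ) + 1, h⟩ : ℚ)) ∧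
    (∀ i : Fin m, ∀ h : (i : ℕ) + 1 < m,
      lam i + (t.1 i : ℚ) - (t.2.1 i : ℚ) ≤
        lam ⟨(i : ℕ) + 1, h⟩ - (t.2.1 ⟨(i : ℕ) + 1, h⟩ : ℚ)) ∧
    (∀ h : 0 < m,
      if t.2.2 then (0 : ℚ) < lam ⟨0, h⟩ - (t.2.1 ⟨0, h⟩ : ℚ)
      else (0 : ℚ) ≤ lam ⟨0, h⟩ - (t.2.1 ⟨0, h⟩ : ℚ))}

/-- Pieri number `c^λ_{γ,r}` of type `C_n`. -/
def cPieri {m : ℕ} (γ lam : Fin m → ℚ) (r : ℕ) : ℕ :=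
  Nat.card {t : (Fin m → ℕ) × (Fin m → ℕ) //
    (∑ i, (t.1 i + t.2 i)) = r ∧
    (∀ i, ((t.2 i : ℚ) - (t.1 i : ℚ)) = lam i - γ i) ∧
    (∀ i : Fin m, ∀ h : (i : ℕ) + 1 < m,
      lam i ≤ lam ⟨(i : ℕ) + 1, h⟩ - (t.2 ⟨(i : ℕ) + 1, h⟩ : ℚ)) ∧
    (∀ i : Fin m, ∀ h : (i : ℕ) + 1 < m,
      lam i + (t.1 i : ℚ) - (t.2 i : ℚ) ≤
        lam ⟨(i : ℕ) + 1, h⟩ - (t.2 ⟨(i : ℕ) + 1, h⟩ : ℚ)) ∧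
    (∀ h : 0 < m, (0 : ℚ) ≤ lam ⟨0, h⟩ - (t.2 ⟨0, h⟩ : ℚ))}

/-- Pieri number `d^λ_{γ,r}` of type `D_n`. -/
def dPieri {m : ℕ} (γ lam : Fin m → ℚ) (r : ℕ) : ℕ :=
  Nat.card {t : (Fin m → ℕ) × (Fin m → ℕ) //
    (∀ h : 0 < m, min (t.1 ⟨0, h⟩) (t.2 ⟨0, h⟩) = 0) ∧
    (∑ i, (t.1 i + t.2 i)) = r ∧
    (∀ i, ((t.2 i : ℚ) - (t.1 i : ℚ)) = lam i - γ i) ∧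
    (∀ h : 1 < m,
      (t.1 ⟨0, by omega⟩ = 0 →
        lam ⟨0, by omega⟩ ≤ lam ⟨1, h⟩ - (t.2 ⟨1, h⟩ : ℚ)) ∧
      (0 < t.1 ⟨0, by omega⟩ →
        -lam ⟨0, by omega⟩ ≤ lam ⟨1, h⟩ - (t.2 ⟨1, h⟩ : ℚ))) ∧
    (∀ i : Fin m, 1 ≤ (i : ℕ) → ∀ h : (i : ℕ) + 1 < m,
      lam i ≤ lam ⟨(i : ℕ) + 1, h⟩ - (t.2 ⟨(i : ℕ) + 1, h⟩ : ℚ)) ∧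
    (∀ i : Fin m, 1 ≤ (i : ℕ) → ∀ h : (i : ℕ) + 1 < m,
      lam i + (t.1 i : ℚ) - (t.2 i : ℚ) ≤
        lam ⟨(i : ℕ) + 1, h⟩ - (t.2 ⟨(i : ℕ) + 1, h⟩ : ℚ)) ∧
    (∀ h : 1 < m,
      (t.1 ⟨0, by omega⟩ = 0 → 0 ≤ γ ⟨0, by omega⟩ →
        lam ⟨0, by omega⟩ - (t.2 ⟨0, by omega⟩ : ℚ) ≤ lam ⟨1, h⟩ - (t.2 ⟨1, h⟩ : ℚ)) ∧
      (t.2 ⟨0, by omega⟩ = 0 → 0 ≤ γ ⟨0, by omega⟩ →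
        lam ⟨0, by omega⟩ + (t.1 ⟨0, by omega⟩ : ℚ) ≤ lam ⟨1, h⟩ - (t.2 ⟨1, h⟩ : ℚ)) ∧
      (t.2 ⟨0, by omega⟩ = 0 → γ ⟨0, by omega⟩ < 0 →
        -lam ⟨0, by omega⟩ - (t.1 ⟨0, by omega⟩ : ℚ) ≤ lam ⟨1, h⟩ - (t.2 ⟨1, h⟩ : ℚ)) ∧
      (t.1 ⟨0, by omega⟩ = 0 → γ ⟨0, by omega⟩ < 0 →
        -lam ⟨0, by omega⟩ + (t.2 ⟨0, by omega⟩ : ℚ) ≤ lam ⟨1, h⟩ - (t.2 ⟨1, h⟩ : ℚ)))}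

/-- The monomial `x^β = ∏ y_i ^ (2 β_i)` in the Laurent polynomial ring
`ℤ[y_1^{±1}, …, y_n^{±1}]`, realized as the group algebra of `ℤ^n`. -/
def xpow {n : ℕ} (β : Fin n → ℚ) : AddMonoidAlgebra ℤ (Fin n → ℤ) :=
  AddMonoidAlgebra.single (fun i => ⌊2 * β i⌋) 1

/-- The Weyl alternant `a_β = ∑_{σ ∈ W_{B_n}} det σ · x^{σ β}` of type `B_n`. -/
def altB {n : ℕ} (β : Fin n → ℚ) : AddMonoidAlgebra ℤ (Fin n → ℤ) :=
  ∑ σ : Equiv.Perm (Fin n), ∑ ε : Fin n → Bool, wDet σ ε • xpow (wAct σ ε β)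

/-- The Weyl alternant `a_β = ∑_{σ ∈ W_{D_n}} det σ · x^{σ β}` of type `D_n`. -/
def altD {n : ℕ} (β : Fin n → ℚ) : AddMonoidAlgebra ℤ (Fin n → ℤ) :=
  ∑ σ : Equiv.Perm (Fin n), ∑ ε : Fin n → Bool,
    if (∏ i, (if ε i then (-1 : ℤ) else 1)) = 1 then wDet σ ε • xpow (wAct σ ε β) else 0

end

/-! ### Group algebra and geometric series -/

/-- The group algebra of the weight space. -/
abbrev GA (n : ℕ) := AddMonoidAlgebra ℤ (Fin n → ℚ)

/-- monomials -/
noncomputable def xm {n : ℕ} (v : Fin n → ℚ) : GA n := AddMonoidAlgebra.single v 1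

theorem xm_add {n : ℕ} (v w : Fin n → ℚ) : xm (v + w) = xm v * xm w := by
  simp [xm, AddMonoidAlgebra.single_mul_single]

theorem xm_zero {n : ℕ} : xm (0 : Fin n → ℚ) = 1 := rfl

theorem xm_nsmul {n : ℕ} (v : Fin n → ℚ) (k : ℕ) : xm (k • v) = xm v ^ k := by
  induction k with
  | zero => simp [xm_zero]
  | succ k ih => rw [succ_nsmul, xm_add, ih, pow_succ]

theorem xm_sum {n : ℕ} {ι : Type*} (s : Finset ι) (f : ι → Fin n → ℚ) :
    xm (∑ i ∈ s, f i) = ∏ i ∈ s, xm (f i) := by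
  classical
  induction s using Finset.induction_on with
  | empty => simp [xm_zero]
  | insert a s ha ih => rw [Finset.sum_insert ha, Finset.prod_insert ha, xm_add, ih]

theorem coeff_mul_xm {n : ℕ} (u : GA n) (v w : Fin n → ℚ) :
    (u * xm v).coeff w = u.coeff (w - v) := by
  rw [xm, AddMonoidAlgebra.coeff_mul_single_apply]; simp [sub_eq_add_neg]

theorem coeff_xm {n : ℕ} (v w : Fin n → ℚ) :
    (xm v).coeff w = if v = w then 1 else 0 := by
  classical
  simp [xm, Finsupp.single_apply]

/-- The geometric series `1 / (1 - a X)`. -/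
noncomputable def geo {R : Type*} [CommRing R] (a : R) : PowerSeries R :=
  PowerSeries.mk fun k => a ^ k

/-- The polynomial `1 - a X`. -/
noncomputable def lin {R : Type*} [CommRing R] (a : R) : PowerSeries R :=
  1 - PowerSeries.C a * PowerSeries.X

theorem lin_mul_geo {R : Type*} [CommRing R] (a : R) : lin a * geo a = 1 := by
  ext k
  rw [lin, sub_mul, one_mul, mul_assoc, map_sub, PowerSeries.coeff_C_mul]
  cases k with
  | zero => simp [geo]
  | succ k => 
    rw [PowerSeries.coeff_succ_X_mul]
    simp [geo, pow_succ, PowerSeries.coeff_one, mul_comm]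

theorem coeff_geo {R : Type*} [CommRing R] (a : R) (k : ℕ) :
    PowerSeries.coeff k (geo a) = a ^ k := by simp [geo]

theorem map_geo {R S : Type*} [CommRing R] [CommRing S] (f : R →+* S) (a : R) :
    PowerSeries.map f (geo a) = geo (f a) := by
  ext k; simp [geo]

theorem map_lin {R S : Type*} [CommRing R] [CommRing S] (f : R →+* S) (a : R) :
    PowerSeries.map f (lin a) = lin (f a) := by
  simp [lin]

theorem rescale_geo {R : Type*} [CommRing R] (a b : R) :
    PowerSeries.rescale b (geo a) = geo (a * b) := by
  ext k; simp [geo, PowerSeries.coeff_rescale, mul_pow, mul_comm]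

/-- The generating series of the `q`-Kostant partition function. -/
noncomputable def ZR {n : ℕ} (R : Finset (Fin n → ℚ)) : PowerSeries (GA n) :=
  ∏ α ∈ R, geo (xm (-α))

/-- Coefficient extraction. -/
noncomputable def cf {n : ℕ} (Z : PowerSeries (GA n)) (β : Fin n → ℚ) : PowerSeries ℤ :=
  PowerSeries.mk fun k => (PowerSeries.coeff k Z).coeff (-β)

theorem coeff_sum' {n : ℕ} {ι : Type*} (s : Finset ι) (f : ι → GA n) (v : Fin n → ℚ) :
    (∑ i ∈ s, f i).coeff v = ∑ i ∈ s, (f i).coeff v := by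
  classical
  induction s using Finset.induction_on with
  | empty => simp
  | insert a s ha ih => rw [Finset.sum_insert ha, Finset.sum_insert ha, ← ih]; simp

theorem kostantQ_eq_cf {n : ℕ} (R : Finset (Fin n → ℚ)) (β : Fin n → ℚ) :
    kostantQ R β = cf (ZR R) β := by
  classical
  ext k
  simp only [kostantQ, cf, PowerSeries.coeff_mk, ZR]
  rw [← Finset.prod_coe_sort, PowerSeries.coeff_prod, coeff_sum']
  have h1 : ∀ m ∈ Finset.finsuppAntidiag (Finset.univ : Finset {α // α ∈ R}) k,
      (∏ α ∈ (Finset.univ : Finset {α // α ∈ R}),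
        PowerSeries.coeff (m α) (geo (xm (-(α : Fin n → ℚ))))).coeff (-β) =
      if (∑ α, (m α : ℚ) • (α : Fin n → ℚ)) = β then 1 else 0 := by
    intro m _
    simp only [coeff_geo, ← xm_nsmul]
    rw [← xm_sum, coeff_xm]
    congr 1
    simp only [smul_neg, Finset.sum_neg_distrib, neg_inj, Nat.cast_smul_eq_nsmul]
  rw [Finset.sum_congr rfl h1, Finset.sum_boole]
  congr 1
  rw [← Nat.card_eq_finsetCard]
  refine Nat.card_congr (Equiv.subtypeEquiv Finsupp.equivFunOnFinite.symm ?_)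
  intro m
  rw [Finset.mem_filter, Finset.mem_finsuppAntidiag]
  simp only [Finset.subset_univ, and_true]
  rfl

theorem kostantQ_neg {n : ℕ} (R : Finset (Fin n → ℚ)) (β : Fin n → ℚ) (i : Fin n)
    (hR : ∀ α ∈ R, 0 ≤ α i) (hβ : β i < 0) : kostantQ R β = 0 := by
  ext k
  simp only [kostantQ, PowerSeries.coeff_mk, map_zero]
  have : IsEmpty {m : {α // α ∈ R} → ℕ //
      (∑ α, m α) = k ∧ (∑ α, (m α : ℚ) • (α : Fin n → ℚ)) = β} := by
    constructor
    rintro ⟨m, -, h⟩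
    have h2 := congrFun h i
    rw [Finset.sum_apply] at h2
    have : 0 ≤ β i := by
      rw [← h2]
      apply Finset.sum_nonneg
      intro α _
      have := hR α.1 α.2
      simp only [Pi.smul_apply, smul_eq_mul]
      positivity
    linarith
  rw [Nat.card_of_isEmpty, Nat.cast_zero]

/-! ### Weyl group action -/

theorem wAct_add {n : ℕ} (σ : Equiv.Perm (Fin n)) (ε : Fin n → Bool) (v w : Fin n → ℚ) :
    wAct σ ε (v + w) = wAct σ ε v + wAct σ ε w := by
  ext i; simp [wAct, mul_add]

/-- the action as an additive map -/
def wHom {n : ℕ} (σ : Equiv.Perm (Fin n)) (ε : Fin n → Bool) : (Fin n → ℚ) →+ (Fin n → ℚ) where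
  toFun := wAct σ ε
  map_zero' := by ext i; simp [wAct]
  map_add' := wAct_add σ ε

/-- the action on the group algebra -/
noncomputable def wA {n : ℕ} (σ : Equiv.Perm (Fin n)) (ε : Fin n → Bool) : GA n →+* GA n :=
  AddMonoidAlgebra.mapDomainRingHom ℤ (wHom σ ε)

theorem wA_xm {n : ℕ} (σ : Equiv.Perm (Fin n)) (ε : Fin n → Bool) (v : Fin n → ℚ) :
    wA σ ε (xm v) = xm (wAct σ ε v) := by
  simp [wA, xm, wHom]

theorem wAct_comp {n : ℕ} (σ τ : Equiv.Perm (Fin n)) (ε δ : Fin n → Bool) (v : Fin n → ℚ) :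
    wAct σ ε (wAct τ δ v) = wAct (σ * τ) (fun i => xor (ε i) (δ (σ⁻¹ i))) v := by
  ext i
  simp only [wAct, mul_inv_rev, Equiv.Perm.mul_apply]
  rcases Bool.eq_false_or_eq_true (ε i) with h1 | h1 <;>
    rcases Bool.eq_false_or_eq_true (δ (σ⁻¹ i)) with h2 | h2 <;> simp only [h1, h2] <;> simp

theorem wA_comp {n : ℕ} (σ τ : Equiv.Perm (Fin n)) (ε δ : Fin n → Bool) (u : GA n) :
    wA σ ε (wA τ δ u) = wA (σ * τ) (fun i => xor (ε i) (δ (σ⁻¹ i))) u := by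
  have : (wA σ ε).comp (wA τ δ) = wA (σ * τ) (fun i => xor (ε i) (δ (σ⁻¹ i))) := by
    rw [wA, wA, ← AddMonoidAlgebra.mapDomainRingHom_comp, wA]
    congr 1
    refine AddMonoidHom.ext fun v => ?_
    exact wAct_comp σ τ ε δ v
  rw [← this]; rfl

/-- the sign product -/
def sp {n : ℕ} (ε : Fin n → Bool) : ℤ := ∏ i, (if ε i then (-1 : ℤ) else 1)

theorem sp_xor {n : ℕ} (σ : Equiv.Perm (Fin n)) (ε δ : Fin n → Bool) :
    sp (fun i => xor (ε i) (δ (σ⁻¹ i))) = sp ε * sp δ := by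
  have : sp δ = ∏ i, (if δ (σ⁻¹ i) then (-1 : ℤ) else 1) :=
    (Equiv.prod_comp σ⁻¹ (fun i => (if δ i then (-1 : ℤ) else 1))).symm
  rw [this, sp, sp, ← Finset.prod_mul_distrib]
  apply Finset.prod_congr rfl
  intro i _
  cases ε i <;> cases δ (σ⁻¹ i) <;> simp

/-- Weights for the three Weyl groups. `cW false`: types B, C; `cW true`: type D. -/
def cW (d : Bool) {n : ℕ} (σ : Equiv.Perm (Fin n)) (ε : Fin n → Bool) : ℤ :=
  if d = true ∧ sp ε ≠ 1 then 0 else wDet σ ε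

theorem cW_comp (d : Bool) {n : ℕ} (σ τ : Equiv.Perm (Fin n)) (ε δ : Fin n → Bool)
    (h : d = true → sp δ = 1) :
    cW d (σ * τ) (fun i => xor (ε i) (δ (σ⁻¹ i))) = wDet τ δ * cW d σ ε := by
  have hdet : wDet (σ * τ) (fun i => xor (ε i) (δ (σ⁻¹ i))) = wDet τ δ * wDet σ ε := by
    have := sp_xor σ ε δ
    unfold sp at this
    unfold wDet
    rw [this, Equiv.Perm.sign_mul]
    push_cast
    ring
  unfold cW
  rw [hdet, sp_xor]
  by_cases hd : d = true
  · rw [h hd, mul_one]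
    split_ifs <;> simp
  · simp [hd]

/-- The alternating functional. -/
noncomputable def FW (d : Bool) {n : ℕ} (Z : PowerSeries (GA n)) (ρ : Fin n → ℚ) (u : GA n) :
    PowerSeries ℤ :=
  ∑ σ : Equiv.Perm (Fin n), ∑ ε : Fin n → Bool,
    cW d σ ε • PowerSeries.mk fun k =>
      (PowerSeries.coeff k Z * wA σ ε u * xm (-ρ)).coeff 0

theorem FW_add (d : Bool) {n : ℕ} (Z : PowerSeries (GA n)) (ρ : Fin n → ℚ) (u v : GA n) :
    FW d Z ρ (u + v) = FW d Z ρ u + FW d Z ρ v := by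
  simp only [FW, ← Finset.sum_add_distrib, ← smul_add]
  refine Finset.sum_congr rfl fun σ _ => Finset.sum_congr rfl fun ε _ => ?_
  congr 1
  ext k
  simp [mul_add, add_mul]

theorem FW_xm (d : Bool) {n : ℕ} (Z : PowerSeries (GA n)) (ρ v : Fin n → ℚ) :
    FW d Z ρ (xm v) = ∑ σ : Equiv.Perm (Fin n), ∑ ε : Fin n → Bool,
      cW d σ ε • cf Z (wAct σ ε v - ρ) := by
  refine Finset.sum_congr rfl fun σ _ => Finset.sum_congr rfl fun ε _ => ?_
  congr 1
  ext k
  simp only [PowerSeries.coeff_mk, cf, wA_xm]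
  rw [mul_assoc, ← xm_add, coeff_mul_xm]
  congr 1
  ring_nf

theorem FW_wA (d : Bool) {n : ℕ} (Z : PowerSeries (GA n)) (ρ : Fin n → ℚ) (u : GA n)
    (τ : Equiv.Perm (Fin n)) (δ : Fin n → Bool) (h : d = true → sp δ = 1) :
    FW d Z ρ (wA τ δ u) = wDet τ δ • FW d Z ρ u := by
  have hdd : wDet τ δ * wDet τ δ = 1 := by
    have h1 : ∀ ε : Fin n → Bool, sp ε * sp ε = 1 := by
      intro ε
      rw [sp, ← Finset.prod_mul_distrib]
      apply Finset.prod_eq_one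
      intro i _
      split_ifs <;> norm_num
    have h2 := h1 δ
    unfold sp at h2
    have h3 : ((Equiv.Perm.sign τ : ℤ)) * (Equiv.Perm.sign τ : ℤ) = 1 := by
      rw [← Units.val_mul, Int.units_mul_self]; rfl
    unfold wDet
    rw [mul_mul_mul_comm, h3, h2, one_mul]
  have hinj : ∀ σ ε, cW d σ ε = wDet τ δ * cW d (σ * τ) (fun i => xor (ε i) (δ (σ⁻¹ i))) := by
    intro σ ε
    rw [cW_comp d σ τ ε δ h, ← mul_assoc, hdd, one_mul]
  simp only [FW, Finset.smul_sum]
  simp only [wA_comp]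
  have key : ∀ f : Equiv.Perm (Fin n) → (Fin n → Bool) → PowerSeries ℤ,
      ∑ σ : Equiv.Perm (Fin n), ∑ ε : Fin n → Bool,
        f (σ * τ) (fun i => xor (ε i) (δ (σ⁻¹ i))) = ∑ σ, ∑ ε, f σ ε := by
    intro f
    rw [← Equiv.sum_comp (Equiv.mulRight τ) (fun σ => ∑ ε, f σ ε)]
    refine Finset.sum_congr rfl fun σ _ => ?_
    let e : (Fin n → Bool) ≃ (Fin n → Bool) :=
      { toFun := fun ε i => xor (ε i) (δ (σ⁻¹ i))
        invFun := fun ε i => xor (ε i) (δ (σ⁻¹ i))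
        left_inv := fun ε => by ext i; simp
        right_inv := fun ε => by ext i; simp }
    exact Equiv.sum_comp e (fun ε => f (σ * τ) ε)
  rw [← key (fun σ ε => wDet τ δ • cW d σ ε • PowerSeries.mk fun k =>
      (PowerSeries.coeff k Z * wA σ ε u * xm (-ρ)).coeff 0)]
  refine Finset.sum_congr rfl fun σ _ => Finset.sum_congr rfl fun ε _ => ?_
  rw [hinj σ ε, mul_smul]

/-! ### The alternating functional on power series -/

/-- Coefficientwise extension of `FW`. -/
noncomputable def LW (d : Bool) {n : ℕ} (Z : PowerSeries (GA n)) (ρ : Fin n → ℚ)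
    (u : PowerSeries (GA n)) : PowerSeries (PowerSeries ℤ) :=
  PowerSeries.mk fun m => FW d Z ρ (PowerSeries.coeff m u)

theorem FW_zero (d : Bool) {n : ℕ} (Z : PowerSeries (GA n)) (ρ : Fin n → ℚ) :
    FW d Z ρ 0 = 0 := by
  have := FW_add d Z ρ 0 0
  rw [add_zero] at this
  simpa using this

theorem LW_add (d : Bool) {n : ℕ} (Z : PowerSeries (GA n)) (ρ : Fin n → ℚ)
    (u v : PowerSeries (GA n)) : LW d Z ρ (u + v) = LW d Z ρ u + LW d Z ρ v := by
  ext1 m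
  simp [LW, FW_add]

theorem LW_sub (d : Bool) {n : ℕ} (Z : PowerSeries (GA n)) (ρ : Fin n → ℚ)
    (u v : PowerSeries (GA n)) : LW d Z ρ (u - v) = LW d Z ρ u - LW d Z ρ v := by
  rw [eq_sub_iff_add_eq, ← LW_add, sub_add_cancel]

theorem LW_X (d : Bool) {n : ℕ} (Z : PowerSeries (GA n)) (ρ : Fin n → ℚ)
    (u : PowerSeries (GA n)) : LW d Z ρ (PowerSeries.X * u) = PowerSeries.X * LW d Z ρ u := by
  ext1 m
  cases m with
  | zero => simp [LW, FW_zero]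
  | succ m => rw [PowerSeries.coeff_succ_X_mul]; simp [LW, PowerSeries.coeff_succ_X_mul]

theorem LW_map (d : Bool) {n : ℕ} (Z : PowerSeries (GA n)) (ρ : Fin n → ℚ)
    (u : PowerSeries (GA n)) (τ : Equiv.Perm (Fin n)) (δ : Fin n → Bool)
    (h : d = true → sp δ = 1) (hdet : wDet τ δ = -1) :
    LW d Z ρ (PowerSeries.map (wA τ δ) u) = - LW d Z ρ u := by
  ext1 m
  simp [LW, FW_wA d Z ρ _ τ δ h, hdet]

theorem LW_fixed (d : Bool) {n : ℕ} (Z : PowerSeries (GA n)) (ρ : Fin n → ℚ)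
    (u : PowerSeries (GA n)) (τ : Equiv.Perm (Fin n)) (δ : Fin n → Bool)
    (h : d = true → sp δ = 1) (hdet : wDet τ δ = -1)
    (hu : PowerSeries.map (wA τ δ) u = u) :
    LW d Z ρ u = 0 := by
  have := LW_map d Z ρ u τ δ h hdet
  rw [hu] at this
  ext m k
  have h2 := congrArg (fun f => PowerSeries.coeff k (PowerSeries.coeff m f)) this
  simp only [map_neg] at h2
  simp only [map_zero]
  omega

/-! reflections -/

theorem sp_false {n : ℕ} : sp (fun _ : Fin n => false) = 1 := by simp [sp]

theorem wDet_swap {n : ℕ} {i j : Fin n} (h : i ≠ j) :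
    wDet (Equiv.swap i j) (fun _ => false) = -1 := by
  simp [wDet, Equiv.Perm.sign_swap h]

theorem wDet_neg {n : ℕ} (i : Fin n) :
    wDet 1 (fun k => decide (k = i)) = -1 := by
  simp [wDet]

theorem sp_two {n : ℕ} {i j : Fin n} (h : i ≠ j) :
    sp (fun k => decide (k = i ∨ k = j)) = 1 := by
  have : (Finset.univ.filter fun k : Fin n => k = i ∨ k = j) = {i, j} := by
    ext k; simp
  simp [sp, Finset.prod_ite, this, Finset.card_pair h]

theorem wDet_two {n : ℕ} {i j : Fin n} (h : i ≠ j) :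
    wDet (Equiv.swap i j) (fun k => decide (k = i ∨ k = j)) = -1 := by
  have := sp_two h
  unfold sp at this
  rw [wDet, this, Equiv.Perm.sign_swap h]; simp

/-- basis vectors -/
def ee {n : ℕ} (i : Fin n) : Fin n → ℚ := Pi.single i 1

theorem wAct_ee {n : ℕ} (τ : Equiv.Perm (Fin n)) (δ : Fin n → Bool) (j : Fin n) :
    wAct τ δ (ee j) = if δ (τ j) then -ee (τ j) else ee (τ j) := by
  ext i
  have hiff : τ⁻¹ i = j ↔ i = τ j := by
    rw [Equiv.Perm.inv_eq_iff_eq]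
  by_cases hi : i = τ j
  · have := hiff.mpr hi
    subst hi
    simp only [wAct, ee, this, Pi.single_eq_same]
    split_ifs <;> simp
  · have h2 : τ⁻¹ i ≠ j := fun h => hi (hiff.mp h)
    simp only [wAct, ee, Pi.single_eq_of_ne h2, mul_zero]
    split_ifs <;> simp [Pi.single_eq_of_ne hi]

theorem wAct_neg' {n : ℕ} (τ : Equiv.Perm (Fin n)) (δ : Fin n → Bool) (v : Fin n → ℚ) :
    wAct τ δ (-v) = - wAct τ δ v := by
  ext i; simp [wAct]

/-- `1 - t x_i` -/
noncomputable def pp {n : ℕ} (i : Fin n) : PowerSeries (GA n) := lin (xm (ee i))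
/-- `1 - t / x_i` -/
noncomputable def pm {n : ℕ} (i : Fin n) : PowerSeries (GA n) := lin (xm (-ee i))

/-- The generating series of symmetric powers. -/
noncomputable def HH (n : ℕ) : PowerSeries (GA n) :=
  ∏ i : Fin n, (geo (xm (ee i)) * geo (xm (-ee i)))

theorem HH_inv {n : ℕ} (τ : Equiv.Perm (Fin n)) (δ : Fin n → Bool) :
    PowerSeries.map (wA τ δ) (HH n) = HH n := by
  rw [HH, map_prod]
  rw [← Equiv.prod_comp τ (fun i : Fin n => geo (xm (ee i)) * geo (xm (-ee i)))]
  refine Finset.prod_congr rfl fun i _ => ?_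
  rw [map_mul, map_geo, map_geo, wA_xm, wA_xm, wAct_neg', wAct_ee]
  split_ifs
  · rw [neg_neg, mul_comm]
  · rfl

theorem map_swap_pp {n : ℕ} (a b i : Fin n) :
    PowerSeries.map (wA (Equiv.swap a b) (fun _ => false)) (pp i) = pp (Equiv.swap a b i) := by
  simp [pp, map_lin, wA_xm, wAct_ee]

theorem map_pm {n : ℕ} (τ : Equiv.Perm (Fin n)) (δ : Fin n → Bool) (i : Fin n)
    (h : δ (τ i) = false) :
    PowerSeries.map (wA τ δ) (pm i) = pm (τ i) := by
  simp [pm, map_lin, wA_xm, wAct_ee, wAct_neg', h]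

theorem filter_lt_succ {n : ℕ} (k : Fin n) :
    (Finset.univ.filter fun i : Fin n => (i : ℕ) < k + 1) =
      insert k (Finset.univ.filter fun i : Fin n => (i : ℕ) < k) := by
  ext i
  simp only [Finset.mem_filter, Finset.mem_univ, true_and, Finset.mem_insert, Fin.ext_iff]
  omega

theorem filter_le {n : ℕ} (k : Fin n) :
    (Finset.univ.filter fun i : Fin n => (k : ℕ) ≤ i) =
      insert k (Finset.univ.filter fun i : Fin n => (k : ℕ) + 1 ≤ i) := by
  ext i
  simp only [Finset.mem_filter, Finset.mem_univ, true_and, Finset.mem_insert, Fin.ext_iff]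
  omega

/-- shifted staircase -/
def rr (n : ℕ) (r : ℚ) : Fin n → ℚ := fun i => ((i : ℕ) : ℚ) + r

theorem swap_fix_plus {n : ℕ} (r : ℚ) (a b : Fin n) (hab : (b : ℕ) = a + 1) :
    wAct (Equiv.swap a b) (fun _ => false) (rr n r + ee a) = rr n r + ee a := by
  have hne : a ≠ b := by intro h; rw [h] at hab; omega
  ext i
  simp only [wAct, Equiv.swap_inv, Bool.false_eq_true, if_false, one_mul, Pi.add_apply, rr, ee]
  by_cases h1 : i = a
  · subst h1
    simp [hab, Pi.single_eq_of_ne hne.symm]; ring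
  by_cases h2 : i = b
  · subst h2
    simp [hab, Pi.single_eq_of_ne hne.symm]; ring
  rw [Equiv.swap_apply_of_ne_of_ne h1 h2]

theorem swap_fix_minus {n : ℕ} (r : ℚ) (a b : Fin n) (hab : (b : ℕ) = a + 1) :
    wAct (Equiv.swap a b) (fun _ => false) (rr n r - ee b) = rr n r - ee b := by
  have hne : a ≠ b := by intro h; rw [h] at hab; omega
  ext i
  simp only [wAct, Equiv.swap_inv, Bool.false_eq_true, if_false, one_mul, Pi.sub_apply, rr, ee]
  by_cases h1 : i = a
  · subst h1
    simp [hab, Pi.single_eq_of_ne hne]; ring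
  by_cases h2 : i = b
  · subst h2
    simp [hab, Pi.single_eq_of_ne hne]; ring
  rw [Equiv.swap_apply_of_ne_of_ne h1 h2]

theorem C_xm_mul {n : ℕ} (v w : Fin n → ℚ) :
    (PowerSeries.C (xm v) * PowerSeries.C (xm w) : PowerSeries (GA n)) =
      PowerSeries.C (xm (v + w)) := by
  rw [xm_add, map_mul]

section
variable (d : Bool) {n : ℕ} (Z : PowerSeries (GA n)) (ρ₀ : Fin n → ℚ) (r : ℚ)
  (S : PowerSeries (GA n))

theorem stage1_step (hS : ∀ τ δ, PowerSeries.map (wA τ δ) S = S) (a b : Fin n)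
    (hab : (b : ℕ) = a + 1) :
    LW d Z ρ₀ (S * PowerSeries.C (xm (rr n r)) *
      (∏ i ∈ Finset.univ.filter (fun i : Fin n => (i : ℕ) < a + 1), pp i) * ∏ i, pm i) =
    LW d Z ρ₀ (S * PowerSeries.C (xm (rr n r)) *
      (∏ i ∈ Finset.univ.filter (fun i : Fin n => (i : ℕ) < a), pp i) * ∏ i, pm i) := by
  have hne : a ≠ b := by intro h; rw [h] at hab; omega
  have hpp : PowerSeries.map (wA (Equiv.swap a b) (fun _ => false))
      (∏ i ∈ Finset.univ.filter (fun i : Fin n => (i : ℕ) < a), pp i) =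
      ∏ i ∈ Finset.univ.filter (fun i : Fin n => (i : ℕ) < a), pp i := by
    rw [map_prod]
    refine Finset.prod_congr rfl fun i hi => ?_
    simp only [Finset.mem_filter, Finset.mem_univ, true_and] at hi
    rw [map_swap_pp, Equiv.swap_apply_of_ne_of_ne]
    · intro h; rw [h] at hi; omega
    · intro h; rw [h] at hi; omega
  have hpm : PowerSeries.map (wA (Equiv.swap a b) (fun _ => false)) (∏ i : Fin n, pm i) =
      ∏ i : Fin n, pm i := by
    rw [map_prod]
    rw [← Equiv.prod_comp (Equiv.swap a b) (fun i : Fin n => pm i)]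
    exact Finset.prod_congr rfl fun i _ => map_pm _ _ _ rfl
  rw [filter_lt_succ, Finset.prod_insert (by simp)]
  generalize (∏ i ∈ Finset.univ.filter (fun i : Fin n => (i : ℕ) < a), pp i) = P at *
  generalize (∏ i : Fin n, pm i) = Q at *
  have h1 : S * PowerSeries.C (xm (rr n r)) * (pp a * P) * Q =
      S * PowerSeries.C (xm (rr n r)) * P * Q -
      PowerSeries.X * (S * PowerSeries.C (xm (rr n r + ee a)) * P * Q) := by
    rw [← C_xm_mul, show pp a = 1 - PowerSeries.C (xm (ee a)) * PowerSeries.X from rfl]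
    ring
  have hz : LW d Z ρ₀ (S * PowerSeries.C (xm (rr n r + ee a)) * P * Q) = 0 := by
    refine LW_fixed d Z ρ₀ _ (Equiv.swap a b) (fun _ => false)
      (fun _ => sp_false) (wDet_swap hne) ?_
    rw [map_mul, map_mul, map_mul, hS, PowerSeries.map_C, wA_xm, swap_fix_plus r a b hab,
      hpp, hpm]
  rw [h1, LW_sub, LW_X, hz, mul_zero, sub_zero]

theorem stage1 (hS : ∀ τ δ, PowerSeries.map (wA τ δ) S = S) (k : ℕ) (hk : k + 1 ≤ n) :
    LW d Z ρ₀ (S * PowerSeries.C (xm (rr n r)) *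
      (∏ i ∈ Finset.univ.filter (fun i : Fin n => (i : ℕ) < k), pp i) * ∏ i, pm i) =
    LW d Z ρ₀ (S * PowerSeries.C (xm (rr n r)) * ∏ i, pm i) := by
  induction k with
  | zero => simp
  | succ k ih =>
    rw [← ih (by omega)]
    exact stage1_step d Z ρ₀ r S hS ⟨k, by omega⟩ ⟨k + 1, by omega⟩ rfl

theorem expand_pm (a : Fin n) (v : Fin n → ℚ) :
    S * PowerSeries.C (xm v) * (∏ i ∈ Finset.univ.filter (fun i : Fin n => (a : ℕ) ≤ i), pm i) =
    S * PowerSeries.C (xm v) *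
      (∏ i ∈ Finset.univ.filter (fun i : Fin n => (a : ℕ) + 1 ≤ i), pm i) -
    PowerSeries.X * (S * PowerSeries.C (xm (v - ee a)) *
      (∏ i ∈ Finset.univ.filter (fun i : Fin n => (a : ℕ) + 1 ≤ i), pm i)) := by
  rw [filter_le, Finset.prod_insert (by simp), sub_eq_add_neg v, ← C_xm_mul,
    show pm a = 1 - PowerSeries.C (xm (-ee a)) * PowerSeries.X from rfl]
  ring

theorem prod_pm_fix (τ : Equiv.Perm (Fin n)) (δ : Fin n → Bool) (k : ℕ)
    (h : ∀ i : Fin n, k ≤ (i : ℕ) → τ i = i ∧ δ i = false) :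
    PowerSeries.map (wA τ δ) (∏ i ∈ Finset.univ.filter (fun i : Fin n => k ≤ (i : ℕ)), pm i) =
      ∏ i ∈ Finset.univ.filter (fun i : Fin n => k ≤ (i : ℕ)), pm i := by
  rw [map_prod]
  refine Finset.prod_congr rfl fun i hi => ?_
  simp only [Finset.mem_filter, Finset.mem_univ, true_and] at hi
  obtain ⟨h1, h2⟩ := h i hi
  rw [map_pm _ _ _ (by rw [h1, h2]), h1]

theorem stage2_step (hS : ∀ τ δ, PowerSeries.map (wA τ δ) S = S) (a b : Fin n)
    (hab : (b : ℕ) = a + 1) :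
    LW d Z ρ₀ (S * PowerSeries.C (xm (rr n r)) *
      (∏ i ∈ Finset.univ.filter (fun i : Fin n => (b : ℕ) ≤ i), pm i)) =
    LW d Z ρ₀ (S * PowerSeries.C (xm (rr n r)) *
      (∏ i ∈ Finset.univ.filter (fun i : Fin n => (b : ℕ) + 1 ≤ i), pm i)) := by
  have hne : a ≠ b := by intro h; rw [h] at hab; omega
  suffices hz : LW d Z ρ₀ (S * PowerSeries.C (xm (rr n r - ee b)) *
      (∏ i ∈ Finset.univ.filter (fun i : Fin n => (b : ℕ) + 1 ≤ i), pm i)) = 0 by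
    rw [expand_pm, LW_sub, LW_X, hz, mul_zero, sub_zero]
  refine LW_fixed d Z ρ₀ _ (Equiv.swap a b) (fun _ => false)
    (fun _ => sp_false) (wDet_swap hne) ?_
  rw [map_mul, map_mul, hS, PowerSeries.map_C, wA_xm, swap_fix_minus r a b hab, prod_pm_fix]
  intro i hi
  refine ⟨Equiv.swap_apply_of_ne_of_ne ?_ ?_, rfl⟩
  · intro h; rw [h] at hi; omega
  · intro h; rw [h] at hi; omega

theorem stage2 (hS : ∀ τ δ, PowerSeries.map (wA τ δ) S = S) (k : ℕ) (hk : 1 ≤ k) :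
    LW d Z ρ₀ (S * PowerSeries.C (xm (rr n r)) *
      (∏ i ∈ Finset.univ.filter (fun i : Fin n => k ≤ (i : ℕ)), pm i)) =
    LW d Z ρ₀ (S * PowerSeries.C (xm (rr n r))) := by
  by_cases hkn : n ≤ k
  · rw [Finset.filter_false_of_mem, Finset.prod_empty, mul_one]
    intro i _; omega
  · have hm : ∀ m, m + k = n → LW d Z ρ₀ (S * PowerSeries.C (xm (rr n r)) *
      (∏ i ∈ Finset.univ.filter (fun i : Fin n => k ≤ (i : ℕ)), pm i)) =
        LW d Z ρ₀ (S * PowerSeries.C (xm (rr n r))) := by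
      intro m
      clear hkn
      induction m generalizing k with
      | zero =>
        intro h
        rw [Finset.filter_false_of_mem, Finset.prod_empty, mul_one]
        intro i _; omega
      | succ m ih =>
        intro h
        rw [← ih (k + 1) (by omega) (by omega)]
        exact stage2_step d Z ρ₀ r S hS ⟨k - 1, by omega⟩ ⟨k, by omega⟩ (by simp; omega)
    exact hm (n - k) (by omega)

end

theorem prod_pm_zero {n : ℕ} (a : Fin n) (h : (a : ℕ) = 0) :
    ∏ i ∈ Finset.univ.filter (fun i : Fin n => (a : ℕ) ≤ i), pm i = ∏ i : Fin n, pm i := by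
  rw [Finset.filter_true_of_mem]
  intro i _; omega

theorem neg_act {n : ℕ} (a : Fin n) (v : Fin n → ℚ) (i : Fin n) :
    wAct 1 (fun k => decide (k = a)) v i = if i = a then - v i else v i := by
  simp [wAct]

theorem base_C {N : ℕ} (Z : PowerSeries (GA (N + 1))) (ρ₀ : Fin (N + 1) → ℚ)
    (S : PowerSeries (GA (N + 1))) (hS : ∀ τ δ, PowerSeries.map (wA τ δ) S = S) :
    LW false Z ρ₀ (S * PowerSeries.C (xm (rr (N + 1) 1)) * ∏ i, pm i) =
    LW false Z ρ₀ (S * PowerSeries.C (xm (rr (N + 1) 1))) := by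
  rw [← stage2 false Z ρ₀ 1 S hS 1 le_rfl]
  have h := expand_pm S (0 : Fin (N + 1)) (rr (N + 1) 1)
  rw [prod_pm_zero 0 rfl] at h
  simp only [Fin.val_zero, zero_add] at h
  suffices hz : LW false Z ρ₀ (S * PowerSeries.C (xm (rr (N + 1) 1 - ee 0)) *
      (∏ i ∈ Finset.univ.filter (fun i : Fin (N + 1) => 1 ≤ (i : ℕ)), pm i)) = 0 by
    rw [h, LW_sub, LW_X, hz, mul_zero, sub_zero]
  refine LW_fixed false Z ρ₀ _ 1 (fun k => decide (k = 0)) (by simp) (wDet_neg 0) ?_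
  rw [map_mul, map_mul, hS, PowerSeries.map_C, wA_xm, prod_pm_fix]
  · congr 4
    ext i
    rw [neg_act]
    split_ifs with h0
    · subst h0; simp [rr, ee]
    · rfl
  · intro i hi
    refine ⟨rfl, ?_⟩
    simp only [decide_eq_false_iff_not]
    intro h; rw [h] at hi; simp at hi

theorem base_B {N : ℕ} (Z : PowerSeries (GA (N + 1))) (ρ₀ : Fin (N + 1) → ℚ)
    (S : PowerSeries (GA (N + 1))) (hS : ∀ τ δ, PowerSeries.map (wA τ δ) S = S) :
    LW false Z ρ₀ (S * PowerSeries.C (xm (rr (N + 1) (1 / 2))) * ∏ i, pm i) =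
    (1 + PowerSeries.X) * LW false Z ρ₀ (S * PowerSeries.C (xm (rr (N + 1) (1 / 2)))) := by
  rw [← stage2 false Z ρ₀ (1 / 2) S hS 1 le_rfl]
  have h := expand_pm S (0 : Fin (N + 1)) (rr (N + 1) (1 / 2))
  rw [prod_pm_zero 0 rfl] at h
  simp only [Fin.val_zero, zero_add] at h
  have h2 := LW_map false Z ρ₀ (S * PowerSeries.C (xm (rr (N + 1) (1 / 2))) *
      (∏ i ∈ Finset.univ.filter (fun i : Fin (N + 1) => 1 ≤ (i : ℕ)), pm i)) 1
      (fun k => decide (k = 0)) (by simp) (wDet_neg 0)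
  rw [map_mul, map_mul, hS, PowerSeries.map_C, wA_xm, prod_pm_fix] at h2
  · have h3 : wAct 1 (fun k => decide (k = 0)) (rr (N + 1) (1 / 2)) =
        rr (N + 1) (1 / 2) - ee 0 := by
      ext i
      rw [neg_act]
      split_ifs with h0
      · subst h0; simp [rr, ee]; norm_num
      · simp [ee, Pi.single_eq_of_ne h0]
    rw [h3] at h2
    rw [h, LW_sub, LW_X, h2]
    ring
  · intro i hi
    refine ⟨rfl, ?_⟩
    simp only [decide_eq_false_iff_not]
    intro h; rw [h] at hi; simp at hi

theorem two_act {n : ℕ} (a b : Fin n) (v : Fin n → ℚ) (i : Fin n) :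
    wAct (Equiv.swap a b) (fun k => decide (k = a ∨ k = b)) v i =
      if i = a then - v b else if i = b then - v a else v i := by
  by_cases h1 : i = a
  · subst h1; simp [wAct]
  by_cases h2 : i = b
  · subst h2; simp [wAct, h1]
  simp [wAct, h1, h2, Equiv.swap_apply_of_ne_of_ne h1 h2]

theorem base_D {N : ℕ} (Z : PowerSeries (GA (N + 2))) (ρ₀ : Fin (N + 2) → ℚ)
    (S : PowerSeries (GA (N + 2))) (hS : ∀ τ δ, PowerSeries.map (wA τ δ) S = S) :
    LW true Z ρ₀ (S * PowerSeries.C (xm (rr (N + 2) 0)) * ∏ i, pm i) =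
    (1 - PowerSeries.X ^ 2) * LW true Z ρ₀ (S * PowerSeries.C (xm (rr (N + 2) 0))) := by
  rw [← stage2 true Z ρ₀ 0 S hS 2 (by norm_num)]
  have h01 : (0 : Fin (N + 2)) ≠ 1 := by simp
  have h : S * PowerSeries.C (xm (rr (N + 2) 0)) * (∏ i, pm i) =
      S * PowerSeries.C (xm (rr (N + 2) 0)) *
      (∏ i ∈ Finset.univ.filter (fun i : Fin (N + 2) => 1 ≤ (i : ℕ)), pm i) -
      PowerSeries.X * (S * PowerSeries.C (xm (rr (N + 2) 0 - ee 0)) *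
      (∏ i ∈ Finset.univ.filter (fun i : Fin (N + 2) => 1 ≤ (i : ℕ)), pm i)) := by
    rw [← prod_pm_zero (0 : Fin (N + 2)) rfl]
    exact expand_pm S (0 : Fin (N + 2)) (rr (N + 2) 0)
  have h' : ∀ v, S * PowerSeries.C (xm v) *
      (∏ i ∈ Finset.univ.filter (fun i : Fin (N + 2) => 1 ≤ (i : ℕ)), pm i) =
      S * PowerSeries.C (xm v) *
      (∏ i ∈ Finset.univ.filter (fun i : Fin (N + 2) => 2 ≤ (i : ℕ)), pm i) -
      PowerSeries.X * (S * PowerSeries.C (xm (v - ee 1)) *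
      (∏ i ∈ Finset.univ.filter (fun i : Fin (N + 2) => 2 ≤ (i : ℕ)), pm i)) :=
    fun v => expand_pm S (1 : Fin (N + 2)) v
  rw [h, h', h']
  have hQ := prod_pm_fix (n := N + 2) (Equiv.swap 0 1) (fun k => decide (k = 0 ∨ k = 1)) 2 (by
    intro i hi
    have hi0 : i ≠ 0 := by intro h; rw [h] at hi; simp at hi
    have hi1 : i ≠ 1 := by intro h; rw [h] at hi; simp at hi
    exact ⟨Equiv.swap_apply_of_ne_of_ne hi0 hi1, by simp [hi0, hi1]⟩)
  have hQ' := prod_pm_fix (n := N + 2) (Equiv.swap 0 1) (fun _ => false) 2 (by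
    intro i hi
    have hi0 : i ≠ 0 := by intro h; rw [h] at hi; simp at hi
    have hi1 : i ≠ 1 := by intro h; rw [h] at hi; simp at hi
    exact ⟨Equiv.swap_apply_of_ne_of_ne hi0 hi1, rfl⟩)
  set Q := ∏ i ∈ Finset.univ.filter (fun i : Fin (N + 2) => 2 ≤ (i : ℕ)), pm i with hQdef
  have z1 : LW true Z ρ₀ (S * PowerSeries.C (xm (rr (N + 2) 0 - ee 1)) * Q) = 0 := by
    refine LW_fixed true Z ρ₀ _ (Equiv.swap 0 1) (fun _ => false) (fun _ => sp_false)
      (wDet_swap h01) ?_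
    rw [map_mul, map_mul, hS, PowerSeries.map_C, wA_xm, hQ', swap_fix_minus 0 0 1 (by simp)]
  have z2 : LW true Z ρ₀ (S * PowerSeries.C (xm (rr (N + 2) 0 - ee 0)) * Q) = 0 := by
    refine LW_fixed true Z ρ₀ _ (Equiv.swap 0 1) _ (fun _ => sp_two h01)
      (wDet_two h01) ?_
    rw [map_mul, map_mul, hS, PowerSeries.map_C, wA_xm, hQ]
    congr 4
    ext i
    rw [two_act]
    split_ifs with h0 h1
    · subst h0; simp [rr, ee]
    · subst h1; simp [rr, ee]
    · rfl
  have z3 : LW true Z ρ₀ (S * PowerSeries.C (xm (rr (N + 2) 0 - ee 0 - ee 1)) * Q) =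
      - LW true Z ρ₀ (S * PowerSeries.C (xm (rr (N + 2) 0)) * Q) := by
    rw [← LW_map true Z ρ₀ _ (Equiv.swap 0 1) _ (fun _ => sp_two h01) (wDet_two h01)]
    rw [map_mul, map_mul, hS, PowerSeries.map_C, wA_xm, hQ]
    congr 5
    ext i
    rw [two_act]
    split_ifs with h0 h1
    · subst h0; simp [rr, ee]
    · subst h1; simp [rr, ee]
    · simp [ee, Pi.single_eq_of_ne h0, Pi.single_eq_of_ne h1]
  simp only [LW_sub, LW_X, z1, z2, z3]
  ring

theorem HH_mul {N : ℕ} :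
    HH (N + 1) * (∏ i ∈ Finset.univ.filter (fun i : Fin (N + 1) => (i : ℕ) < N), pp i) *
      ∏ i, pm i = geo (xm (ee (Fin.last N))) := by
  have h1 : (∏ i : Fin (N + 1), pp i) = pp (Fin.last N) *
      ∏ i ∈ Finset.univ.filter (fun i : Fin (N + 1) => (i : ℕ) < N), pp i := by
    have := filter_lt_succ (Fin.last N)
    simp only [Fin.val_last] at this
    rw [← Finset.prod_insert (by simp), ← this]
    apply Finset.prod_congr _ fun _ _ => rfl
    ext i; simp; omega
  have h2 : HH (N + 1) * (∏ i : Fin (N + 1), pp i) * ∏ i, pm i = 1 := by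
    rw [HH, ← Finset.prod_mul_distrib, ← Finset.prod_mul_distrib]
    apply Finset.prod_eq_one
    intro i _
    have e1 := lin_mul_geo (xm (ee i))
    have e2 := lin_mul_geo (xm (-ee i))
    rw [pp, pm]
    linear_combination (lin (xm (-ee i)) * geo (xm (-ee i))) * e1 + e2
  have e := lin_mul_geo (xm (ee (Fin.last N)))
  rw [h1, pp] at h2
  linear_combination geo (xm (ee (Fin.last N))) * h2 -
    (HH (N + 1) * (∏ i ∈ Finset.univ.filter (fun i : Fin (N + 1) => (i : ℕ) < N), pp i) *
      ∏ i, pm i) * e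

theorem sym_C {N : ℕ} (Z : PowerSeries (GA (N + 1))) (ρ₀ : Fin (N + 1) → ℚ) :
    LW false Z ρ₀ (PowerSeries.C (xm (rr (N + 1) 1)) * geo (xm (ee (Fin.last N)))) =
    LW false Z ρ₀ (HH (N + 1) * PowerSeries.C (xm (rr (N + 1) 1))) := by
  rw [← base_C Z ρ₀ _ HH_inv, ← stage1 false Z ρ₀ 1 _ HH_inv N le_rfl, ← HH_mul]
  congr 1; ring

theorem sym_D {N : ℕ} (Z : PowerSeries (GA (N + 2))) (ρ₀ : Fin (N + 2) → ℚ) :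
    LW true Z ρ₀ (PowerSeries.C (xm (rr (N + 2) 0)) * geo (xm (ee (Fin.last (N + 1))))) =
    (1 - PowerSeries.X ^ 2) *
      LW true Z ρ₀ (HH (N + 2) * PowerSeries.C (xm (rr (N + 2) 0))) := by
  rw [← base_D Z ρ₀ _ HH_inv, ← stage1 true Z ρ₀ 0 _ HH_inv (N + 1) le_rfl, ← HH_mul]
  congr 1; ring

theorem sym_B {N : ℕ} (Z : PowerSeries (GA (N + 1))) (ρ₀ : Fin (N + 1) → ℚ) :
    LW false Z ρ₀ (PowerSeries.C (xm (rr (N + 1) (1 / 2))) * geo (xm (ee (Fin.last N)))) =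
    (1 - PowerSeries.X ^ 2) *
      LW false Z ρ₀ (HH (N + 1) * geo 1 * PowerSeries.C (xm (rr (N + 1) (1 / 2)))) := by
  have hinv : ∀ τ δ, PowerSeries.map (wA τ δ) (HH (N + 1) * geo 1) = HH (N + 1) * geo 1 := by
    intro τ δ
    rw [map_mul, HH_inv, map_geo, map_one]
  have h : (1 - PowerSeries.X ^ 2) *
      LW false Z ρ₀ (HH (N + 1) * geo 1 * PowerSeries.C (xm (rr (N + 1) (1 / 2)))) =
      (1 - PowerSeries.X) * ((1 + PowerSeries.X) *
      LW false Z ρ₀ (HH (N + 1) * geo 1 * PowerSeries.C (xm (rr (N + 1) (1 / 2))))) := by ring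
  rw [h, ← base_B Z ρ₀ _ hinv, ← stage1 false Z ρ₀ (1 / 2) _ hinv N le_rfl, sub_mul, one_mul,
    ← LW_X, ← LW_sub, ← HH_mul]
  congr 1
  have e := lin_mul_geo (1 : GA (N + 1))
  rw [lin, map_one, one_mul] at e
  linear_combination (- HH (N + 1) * PowerSeries.C (xm (rr (N + 1) (1 / 2))) *
    (∏ i ∈ Finset.univ.filter (fun i : Fin (N + 1) => (i : ℕ) < N), pp i) *
      ∏ i, pm i) * e

/-! ### Products over positive roots -/

theorem ee_apply {n : ℕ} (i k : Fin n) : ee i k = if k = i then 1 else 0 := by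
  simp [ee, Pi.single_apply]

theorem prod_rootsD {n : ℕ} {M : Type*} [CommMonoid M] (f : (Fin n → ℚ) → M) :
    ∏ α ∈ rootsD n, f α =
      ∏ i : Fin n, ∏ j : Fin n, if j < i then f (ee i - ee j) * f (ee i + ee j) else 1 := by
  have hD : rootsD n = ((Finset.univ : Finset (Fin n × Fin n)).filter fun p => p.2 < p.1).image
      (fun p => ee p.1 - ee p.2) ∪
      ((Finset.univ : Finset (Fin n × Fin n)).filter fun p => p.2 < p.1).image
      (fun p => ee p.1 + ee p.2) := rfl
  rw [hD, Finset.prod_union, Finset.prod_image, Finset.prod_image, ← Finset.prod_mul_distrib,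
    Finset.prod_filter, Fintype.prod_prod_type]
  · rintro ⟨i, j⟩ hp ⟨i', j'⟩ hp' h
    simp only [Finset.coe_filter, Finset.mem_univ, true_and, Set.mem_ofPred_eq] at hp hp'
    have h1 := congrFun h i
    have h2 := congrFun h j
    have h3 := congrFun h i'
    simp only [Pi.add_apply, ee_apply] at h1 h2 h3
    have hne : j ≠ i := hp.ne
    have hne' : j' ≠ i' := hp'.ne
    simp only [hne, hne.symm, hne'.symm, if_true, if_false] at h1 h2 h3
    simp only [Prod.mk.injEq]
    by_cases e1 : i = i'
    · subst e1
      refine ⟨rfl, ?_⟩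
      by_contra e2
      simp [hne, e2] at h2
    · have e2 : i = j' := by
        by_contra e2
        simp [e1, e2] at h1
      subst e2
      have e3 : i' = j := by
        by_contra e3
        simp [e3, Ne.symm e1] at h3
      subst e3
      exact absurd hp hp'.asymm
  · rintro ⟨i, j⟩ hp ⟨i', j'⟩ hp' h
    simp only [Finset.coe_filter, Finset.mem_univ, true_and, Set.mem_ofPred_eq] at hp hp'
    have h1 := congrFun h i
    have h2 := congrFun h j
    simp only [Pi.sub_apply, ee_apply] at h1 h2
    have hne : j ≠ i := hp.ne
    simp only [hne, hne.symm, if_true, if_false] at h1 h2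
    simp only [Prod.mk.injEq]
    constructor
    · by_contra e
      simp only [e, if_false] at h1
      split_ifs at h1 <;> norm_num at h1
    · by_contra e
      simp only [e, if_false] at h2
      split_ifs at h2 <;> norm_num at h2
  · rw [Finset.disjoint_left]
    intro v hv hv'
    simp only [Finset.mem_image, Finset.mem_filter, Finset.mem_univ, true_and] at hv hv'
    obtain ⟨⟨i, j⟩, hp, rfl⟩ := hv
    obtain ⟨⟨i', j'⟩, hp', h⟩ := hv'
    have h2 := congrFun h j
    have hne : j ≠ i := (show j < i from hp).ne
    simp only [Pi.sub_apply, Pi.add_apply, ee_apply, hne, if_true, if_false] at h2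
    split_ifs at h2 <;> norm_num at h2

theorem mem_rootsD {n : ℕ} {α : Fin n → ℚ} (h : α ∈ rootsD n) :
    ∃ i j : Fin n, j < i ∧ (α = ee i - ee j ∨ α = ee i + ee j) := by
  simp only [rootsD, Finset.mem_union, Finset.mem_image, Finset.mem_filter, Finset.mem_univ,
    true_and] at h
  rcases h with ⟨⟨i, j⟩, hp, h⟩ | ⟨⟨i, j⟩, hp, h⟩
  · exact ⟨i, j, hp, Or.inl h.symm⟩
  · exact ⟨i, j, hp, Or.inr h.symm⟩

theorem prod_roots_single {n : ℕ} {M : Type*} [CommMonoid M] (f : (Fin n → ℚ) → M) (c : ℚ)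
    (hc : 0 < c) :
    ∏ α ∈ rootsD n ∪ (Finset.univ : Finset (Fin n)).image (fun i => Pi.single i c), f α =
      (∏ α ∈ rootsD n, f α) * ∏ i : Fin n, f (Pi.single i c) := by
  rw [Finset.prod_union, Finset.prod_image]
  · intro i _ j _ h
    by_contra e
    have := congrFun h i
    simp [Pi.single_apply, e] at this
    exact hc.ne' this
  · rw [Finset.disjoint_left]
    intro v hv hv'
    obtain ⟨i, j, hij, h⟩ := mem_rootsD hv
    simp only [Finset.mem_image, Finset.mem_univ, true_and] at hv'
    obtain ⟨k, rfl⟩ := hv'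
    have hne : j ≠ i := hij.ne
    rcases h with h | h
    · have h2 := congrFun h j
      simp only [Pi.sub_apply, ee_apply, hne, if_true, if_false, Pi.single_apply] at h2
      split_ifs at h2 <;> linarith
    · have h2 := congrFun h j
      have h1 := congrFun h i
      simp only [Pi.add_apply, ee_apply, hne, hne.symm, if_true, if_false,
        Pi.single_apply] at h1 h2
      by_cases e : i = k
      · subst e
        simp [hne] at h2
      · simp [e] at h1

/-- Adjoining a zero last coordinate. -/
def io (n : ℕ) : (Fin n → ℚ) →+ (Fin (n + 1) → ℚ) where
  toFun v := Fin.snoc v 0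
  map_zero' := by
    ext i; refine Fin.lastCases ?_ (fun i => ?_) i <;> simp
  map_add' v w := by
    ext i; refine Fin.lastCases ?_ (fun i => ?_) i <;> simp

theorem io_castSucc {n : ℕ} (v : Fin n → ℚ) (i : Fin n) : io n v i.castSucc = v i := by
  simp [io]

theorem io_last {n : ℕ} (v : Fin n → ℚ) : io n v (Fin.last n) = 0 := by
  simp [io]

theorem io_inj {n : ℕ} : Function.Injective (io n) := by
  intro v w h
  ext i
  rw [← io_castSucc v, h, io_castSucc]

theorem io_ee {n : ℕ} (i : Fin n) : io n (ee i) = ee i.castSucc := by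
  ext k
  refine Fin.lastCases ?_ (fun k => ?_) k
  · rw [io_last, ee_apply, if_neg]; exact (Fin.castSucc_lt_last i).ne'
  · rw [io_castSucc, ee_apply, ee_apply]; simp

theorem io_single {n : ℕ} (i : Fin n) (c : ℚ) :
    io n (Pi.single i c) = Pi.single i.castSucc c := by
  ext k
  refine Fin.lastCases ?_ (fun k => ?_) k
  · rw [io_last, Pi.single_eq_of_ne]; exact (Fin.castSucc_lt_last i).ne'
  · rw [io_castSucc, Pi.single_apply, Pi.single_apply]; simp

theorem prod_rootsD_succ {n : ℕ} {M : Type*} [CommMonoid M] (f : (Fin (n + 1) → ℚ) → M) :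
    ∏ α ∈ rootsD (n + 1), f α = (∏ α ∈ rootsD n, f (io n α)) *
      ∏ j : Fin n, (f (ee (Fin.last n) - ee j.castSucc) * f (ee (Fin.last n) + ee j.castSucc)) := by
  rw [prod_rootsD, Fin.prod_univ_castSucc, prod_rootsD]
  congr 1
  · refine Finset.prod_congr rfl fun i _ => ?_
    rw [Fin.prod_univ_castSucc, if_neg (by simp [Fin.le_last]), mul_one]
    refine Finset.prod_congr rfl fun j _ => ?_
    simp [io_ee]
  · rw [Fin.prod_univ_castSucc, if_neg (lt_irrefl _), mul_one]
    refine Finset.prod_congr rfl fun j _ => ?_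
    rw [if_pos (Fin.castSucc_lt_last j)]

/-- the inclusion of group algebras -/
noncomputable def jA (n : ℕ) : GA n →+* GA (n + 1) :=
  AddMonoidAlgebra.mapDomainRingHom ℤ (io n)

theorem jA_xm {n : ℕ} (v : Fin n → ℚ) : jA n (xm v) = xm (io n v) := by
  simp [jA, xm]

/-- substitution in the generating series -/
noncomputable def th {n : ℕ} (u : PowerSeries (GA n)) : PowerSeries (GA (n + 1)) :=
  PowerSeries.rescale (xm (-ee (Fin.last n))) (PowerSeries.map (jA n) u)

theorem th_mul {n : ℕ} (u v : PowerSeries (GA n)) : th (u * v) = th u * th v := by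
  simp [th]

theorem th_geo {n : ℕ} (v : Fin n → ℚ) :
    th (geo (xm v)) = geo (xm (io n v - ee (Fin.last n))) := by
  rw [th, map_geo, rescale_geo, jA_xm, ← xm_add, sub_eq_add_neg]

theorem th_HH {n : ℕ} : th (HH n) = ∏ j : Fin n,
    (geo (xm (-(ee (Fin.last n) - ee j.castSucc))) *
      geo (xm (-(ee (Fin.last n) + ee j.castSucc)))) := by
  rw [HH, th, map_prod, map_prod]
  refine Finset.prod_congr rfl fun j _ => ?_
  have := th_mul (geo (xm (ee j))) (geo (xm (-ee j)))
  rw [th_geo, th_geo, map_neg, io_ee] at this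
  rw [th] at this
  rw [this]
  congr 3 <;> abel_nf

theorem ZR_D {n : ℕ} : ZR (rootsD (n + 1)) =
    PowerSeries.map (jA n) (ZR (rootsD n)) * th (HH n) := by
  rw [ZR, prod_rootsD_succ, th_HH, ZR, map_prod]
  congr 1
  refine Finset.prod_congr rfl fun α _ => ?_
  rw [map_geo, jA_xm, map_neg]

theorem ZR_single {n : ℕ} (c : ℚ) (hc : 0 < c) :
    ZR (rootsD (n + 1) ∪ (Finset.univ : Finset (Fin (n + 1))).image (fun i => Pi.single i c)) =
    PowerSeries.map (jA n)
      (ZR (rootsD n ∪ (Finset.univ : Finset (Fin n)).image (fun i => Pi.single i c))) *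
      th (HH n) * geo (xm (-Pi.single (Fin.last n) c)) := by
  rw [ZR, prod_roots_single _ c hc, ZR, prod_roots_single _ c hc, map_mul,
    Fin.prod_univ_castSucc]
  have h := ZR_D (n := n)
  rw [ZR, ZR] at h
  rw [h]
  have h2 : PowerSeries.map (jA n) (∏ i : Fin n, geo (xm (-Pi.single i c))) =
      ∏ i : Fin n, geo (xm (-Pi.single i.castSucc c)) := by
    rw [map_prod]
    refine Finset.prod_congr rfl fun α _ => ?_
    rw [map_geo, jA_xm, map_neg, io_single]
  rw [h2]
  ring

theorem ZR_B {n : ℕ} : ZR (rootsB (n + 1)) =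
    PowerSeries.map (jA n) (ZR (rootsB n)) * th (HH n * geo 1) := by
  rw [rootsB, ZR_single 1 one_pos, ← rootsB, th_mul, ← xm_zero, th_geo, map_zero, zero_sub, mul_assoc]
  rfl

theorem ZR_C {n : ℕ} : ZR (rootsC (n + 1)) =
    PowerSeries.map (jA n) (ZR (rootsC n)) * th (HH n) *
      geo (xm (-Pi.single (Fin.last n) 2)) := by
  rw [rootsC, ZR_single 2 two_pos, ← rootsC]

/-! ### Coefficient extraction -/

theorem coeff_jA {n : ℕ} (u : GA n) (v : Fin n → ℚ) (c : ℚ) :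
    (jA n u).coeff (Fin.snoc v c) = if c = 0 then u.coeff v else 0 := by
  have h : (jA n u).coeff = Finsupp.mapDomain (io n) u.coeff := by
    simp [jA]
  rw [h]
  split_ifs with hc
  · subst hc
    exact Finsupp.mapDomain_apply io_inj _ _
  · apply Finsupp.mapDomain_of_notMem_range
    rintro ⟨w, hw⟩
    have := congrFun hw (Fin.last n)
    rw [io_last] at this
    simp at this
    exact hc this.symm

theorem cf_branch {n : ℕ} (Z H : PowerSeries (GA n)) (β : Fin n → ℚ) (l : ℕ) :
    cf (PowerSeries.map (jA n) Z * th H) (Fin.snoc β (l : ℚ)) =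
      PowerSeries.X ^ l * cf (Z * PowerSeries.C (PowerSeries.coeff l H)) β := by
  ext k
  rw [PowerSeries.coeff_X_pow_mul']
  simp only [cf, PowerSeries.coeff_mk, PowerSeries.coeff_mul_C]
  rw [PowerSeries.coeff_mul, coeff_sum']
  have h1 : ∀ p ∈ Finset.HasAntidiagonal.antidiagonal k,
      (PowerSeries.coeff p.1 (PowerSeries.map (jA n) Z) * PowerSeries.coeff p.2 (th H)).coeff
        (-(Fin.snoc β (l : ℚ) : Fin (n + 1) → ℚ)) =
      if p.2 = l then (PowerSeries.coeff p.1 Z * PowerSeries.coeff l H).coeff (-β) else 0 := by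
    intro p _
    rw [th, PowerSeries.coeff_rescale, PowerSeries.coeff_map, PowerSeries.coeff_map, ← xm_nsmul,
      mul_comm (xm _), ← mul_assoc, ← map_mul, coeff_mul_xm]
    have h2 : (-(Fin.snoc β (l : ℚ) : Fin (n + 1) → ℚ)) - p.2 • -ee (Fin.last n) =
        Fin.snoc (-β) ((p.2 : ℚ) - l) := by
      ext i
      refine Fin.lastCases ?_ (fun i => ?_) i
      · simp [ee_apply]; ring
      · simp [ee_apply, (Fin.castSucc_lt_last i).ne]
    rw [h2, coeff_jA]
    have h3 : (p.2 : ℚ) - l = 0 ↔ p.2 = l := by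
      rw [sub_eq_zero, Nat.cast_inj]
    by_cases e : p.2 = l
    · rw [if_pos (h3.mpr e), if_pos e, e]
    · rw [if_neg (fun h => e (h3.mp h)), if_neg e]
  rw [Finset.sum_congr rfl h1]
  split_ifs with hk
  · rw [Finset.sum_eq_single (k - l, l)]
    · simp
    · rintro ⟨a, b⟩ hp hne
      rw [Finset.HasAntidiagonal.mem_antidiagonal] at hp
      rw [if_neg]
      rintro rfl
      apply hne
      simp only at hp
      simp only [Prod.mk.injEq, and_true]; omega
    · intro h; exact absurd (by simp [Finset.HasAntidiagonal.mem_antidiagonal]; omega) h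
  · apply Finset.sum_eq_zero
    rintro ⟨a, b⟩ hp
    rw [Finset.HasAntidiagonal.mem_antidiagonal] at hp
    rw [if_neg]
    simp only at hp ⊢
    omega

theorem cf_lin {n : ℕ} (Z : PowerSeries (GA n)) (v β : Fin n → ℚ) :
    cf (Z * lin (xm (-v))) β = cf Z β - PowerSeries.X * cf Z (β - v) := by
  ext k
  have : Z * lin (xm (-v)) = Z - PowerSeries.X * (Z * PowerSeries.C (xm (-v))) := by
    rw [lin]; ring
  rw [this, map_sub]
  cases k with
  | zero => simp [cf]
  | succ k =>
    rw [PowerSeries.coeff_succ_X_mul]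
    simp only [cf, PowerSeries.coeff_mk, map_sub, PowerSeries.coeff_succ_X_mul,
      PowerSeries.coeff_mul_C]
    rw [AddMonoidAlgebra.coeff_sub, Finsupp.sub_apply, coeff_mul_xm]
    congr 2
    abel

theorem FW_inv (d : Bool) {n : ℕ} (Z : PowerSeries (GA n)) (ρ v : Fin n → ℚ) (h : GA n)
    (hh : ∀ σ ε, wA σ ε h = h) :
    FW d Z ρ (h * xm v) = ∑ σ : Equiv.Perm (Fin n), ∑ ε : Fin n → Bool,
      cW d σ ε • cf (Z * PowerSeries.C h) (wAct σ ε v - ρ) := by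
  refine Finset.sum_congr rfl fun σ _ => Finset.sum_congr rfl fun ε _ => ?_
  congr 1
  ext k
  simp only [PowerSeries.coeff_mk, cf, map_mul, wA_xm, hh, PowerSeries.coeff_mul_C]
  rw [← mul_assoc, mul_assoc (_ * h), ← xm_add, coeff_mul_xm]
  congr 1
  abel

/-! ### Reduction of the Weyl group sum -/

/-- extension of a permutation by a fixed last point -/
def extP {n : ℕ} (σ : Equiv.Perm (Fin n)) : Equiv.Perm (Fin (n + 1)) :=
  finSuccEquivLast.symm.permCongr (Equiv.optionCongr σ)

theorem extP_castSucc {n : ℕ} (σ : Equiv.Perm (Fin n)) (i : Fin n) :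
    extP σ i.castSucc = (σ i).castSucc := by
  simp [extP, Equiv.permCongr_apply]

theorem extP_last {n : ℕ} (σ : Equiv.Perm (Fin n)) : extP σ (Fin.last n) = Fin.last n := by
  simp [extP, Equiv.permCongr_apply]

theorem extP_inv_castSucc {n : ℕ} (σ : Equiv.Perm (Fin n)) (i : Fin n) :
    (extP σ)⁻¹ i.castSucc = (σ⁻¹ i).castSucc := by
  rw [Equiv.Perm.inv_eq_iff_eq, extP_castSucc]; simp

theorem extP_inv_last {n : ℕ} (σ : Equiv.Perm (Fin n)) :
    (extP σ)⁻¹ (Fin.last n) = Fin.last n := by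
  rw [Equiv.Perm.inv_eq_iff_eq, extP_last]

theorem extP_sign {n : ℕ} (σ : Equiv.Perm (Fin n)) :
    Equiv.Perm.sign (extP σ) = Equiv.Perm.sign σ := by
  simp [extP, Equiv.Perm.sign_permCongr]

theorem sum_perm_last {n : ℕ} {M : Type*} [AddCommMonoid M] (g : Equiv.Perm (Fin (n + 1)) → M)
    (hg : ∀ σ, σ (Fin.last n) ≠ Fin.last n → g σ = 0) :
    ∑ σ, g σ = ∑ σ : Equiv.Perm (Fin n), g (extP σ) := by
  rw [← Equiv.sum_comp ((Equiv.Perm.decomposeOption (α := Fin n)).symm.trans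
    finSuccEquivLast.symm.permCongr) g, Fintype.sum_prod_type, Fintype.sum_option]
  rw [Finset.sum_eq_zero (s := (Finset.univ : Finset (Fin n))), add_zero]
  · refine Finset.sum_congr rfl fun σ _ => ?_
    congr 1
    ext i
    simp [extP, Equiv.permCongr_apply]
  · intro i _
    refine Finset.sum_eq_zero fun σ _ => hg _ ?_
    simp [Equiv.permCongr_apply, Equiv.Perm.decomposeOption]

theorem sum_bool_last {n : ℕ} {M : Type*} [AddCommMonoid M] (g : (Fin (n + 1) → Bool) → M)
    (hg : ∀ ε, ε (Fin.last n) = true → g ε = 0) :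
    ∑ ε, g ε = ∑ ε : Fin n → Bool, g (Fin.snoc ε false) := by
  symm
  refine Finset.sum_of_injOn (fun ε => Fin.snoc ε false) ?_ (by simp) ?_ (fun _ _ => rfl)
  · intro ε _ ε' _ h
    ext i
    have := congrFun h i.castSucc
    simpa using this
  · intro ε _ h
    apply hg
    by_contra e
    rw [Bool.not_eq_true] at e
    apply h
    refine ⟨Fin.init ε, by simp, ?_⟩
    simp only
    rw [← e, Fin.snoc_init_self]

theorem cW_ext (d : Bool) {n : ℕ} (σ : Equiv.Perm (Fin n)) (ε : Fin n → Bool) :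
    cW d (extP σ) (Fin.snoc ε false) = cW d σ ε := by
  have h : sp (Fin.snoc ε false : Fin (n + 1) → Bool) = sp ε := by
    simp [sp, Fin.prod_univ_castSucc]
  have h2 : wDet (extP σ) (Fin.snoc ε false : Fin (n + 1) → Bool) = wDet σ ε := by
    unfold sp at h
    rw [wDet, h, extP_sign, wDet]
  rw [cW, h, h2, cW]

theorem weyl_reduce (d : Bool) {n : ℕ} (r : ℚ) (hr : 0 ≤ r) (hnr : 0 < (n : ℚ) + r) (l : ℕ)
    (f : (Fin (n + 1) → ℚ) → PowerSeries ℤ) (hf : ∀ v, v (Fin.last n) < 0 → f v = 0) :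
    ∑ σ : Equiv.Perm (Fin (n + 1)), ∑ ε : Fin (n + 1) → Bool, cW d σ ε •
      f (wAct σ ε (rr (n + 1) r + l • ee (Fin.last n)) - rr (n + 1) r) =
    ∑ σ : Equiv.Perm (Fin n), ∑ ε : Fin n → Bool, cW d σ ε •
      f (Fin.snoc (wAct σ ε (rr n r) - rr n r) (l : ℚ)) := by
  rw [sum_perm_last]
  · refine Finset.sum_congr rfl fun σ _ => ?_
    rw [sum_bool_last]
    · refine Finset.sum_congr rfl fun ε _ => ?_
      rw [cW_ext]
      congr 2
      ext i
      refine Fin.lastCases ?_ (fun i => ?_) i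
      · simp [wAct, extP_inv_last, rr, ee_apply]
      · simp [wAct, extP_inv_castSucc, rr, ee_apply, (Fin.castSucc_lt_last _).ne]
    · intro ε hε
      rw [hf, smul_zero]
      simp only [Pi.sub_apply, wAct, hε, if_true, extP_inv_last, Pi.add_apply, rr, Pi.smul_apply,
        ee_apply, Fin.val_last]
      have : (0 : ℚ) ≤ l := Nat.cast_nonneg l
      rw [nsmul_eq_mul, mul_one]
      linarith
  · intro σ hσ
    refine Finset.sum_eq_zero fun ε _ => ?_
    rw [hf, smul_zero]
    have h1 : σ⁻¹ (Fin.last n) ≠ Fin.last n := by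
      intro h
      apply hσ
      rw [Equiv.Perm.inv_eq_iff_eq] at h
      exact h.symm
    simp only [Pi.sub_apply, wAct, Pi.add_apply, rr, Pi.smul_apply,
        ee_apply, h1, if_false, Fin.val_last, smul_zero, add_zero]
    have h2 : ((σ⁻¹ (Fin.last n) : Fin (n + 1)) : ℕ) < n := Fin.val_lt_last h1
    have h3 : (((σ⁻¹ (Fin.last n) : Fin (n + 1)) : ℕ) : ℚ) < n := by exact_mod_cast h2
    have h4 : (0 : ℚ) ≤ (((σ⁻¹ (Fin.last n) : Fin (n + 1)) : ℕ) : ℚ) := Nat.cast_nonneg _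
    split_ifs <;> linarith

/-! ### One-row Kostka-Foulkes polynomials -/

/-- The one-row polynomial. -/
noncomputable def kk (d : Bool) {n : ℕ} (R : Finset (Fin (n + 1) → ℚ)) (r : ℚ) (l : ℕ) :
    PowerSeries ℤ :=
  FW d (ZR R) (rr (n + 1) r) (xm (rr (n + 1) r + l • ee (Fin.last n)))

/-- The alternating sum attached to symmetric powers. -/
noncomputable def gg (d : Bool) {n : ℕ} (R : Finset (Fin n → ℚ)) (r : ℚ) (H : PowerSeries (GA n))
    (l : ℕ) : PowerSeries ℤ :=
  FW d (ZR R) (rr n r) (PowerSeries.coeff l H * xm (rr n r))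

theorem coeff_LW_geo (d : Bool) {n : ℕ} (R : Finset (Fin (n + 1) → ℚ)) (r : ℚ) (l : ℕ) :
    PowerSeries.coeff l (LW d (ZR R) (rr (n + 1) r)
      (PowerSeries.C (xm (rr (n + 1) r)) * geo (xm (ee (Fin.last n))))) = kk d R r l := by
  rw [LW, PowerSeries.coeff_mk, PowerSeries.coeff_C_mul, coeff_geo, ← xm_nsmul, ← xm_add, kk]

theorem coeff_LW_H (d : Bool) {n : ℕ} (R : Finset (Fin n → ℚ)) (r : ℚ) (H : PowerSeries (GA n))
    (l : ℕ) :
    PowerSeries.coeff l (LW d (ZR R) (rr n r) (H * PowerSeries.C (xm (rr n r)))) =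
      gg d R r H l := by
  rw [LW, PowerSeries.coeff_mk, PowerSeries.coeff_mul_C, gg]

theorem coeff_one_sub {S : Type*} [CommRing S] (u : PowerSeries S) (l : ℕ) :
    PowerSeries.coeff (l + 2) ((1 - PowerSeries.X ^ 2) * u) =
      PowerSeries.coeff (l + 2) u - PowerSeries.coeff l u := by
  rw [sub_mul, one_mul, map_sub, PowerSeries.coeff_X_pow_mul]

theorem coeff_one_sub_zero {S : Type*} [CommRing S] (u : PowerSeries S) :
    PowerSeries.coeff 0 ((1 - PowerSeries.X ^ 2) * u) = PowerSeries.coeff 0 u := by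
  simp [sub_mul]

theorem rootsD_last {n : ℕ} : ∀ α ∈ rootsD (n + 1), 0 ≤ α (Fin.last n) := by
  intro α h
  obtain ⟨i, j, hij, h⟩ := mem_rootsD h
  have hj : Fin.last n ≠ j := by
    rintro rfl
    exact absurd (Fin.le_last i) (not_le.mpr hij)
  rcases h with rfl | rfl
  · simp only [Pi.sub_apply, ee_apply, hj, if_false]
    split_ifs <;> norm_num
  · simp only [Pi.add_apply, ee_apply, hj, if_false]
    split_ifs <;> norm_num

theorem roots_single_last {n : ℕ} (c : ℚ) (hc : 0 < c) : ∀ α ∈ rootsD (n + 1) ∪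
    (Finset.univ : Finset (Fin (n + 1))).image (fun i => Pi.single i c), 0 ≤ α (Fin.last n) := by
  intro α h
  rw [Finset.mem_union] at h
  rcases h with h | h
  · exact rootsD_last α h
  · simp only [Finset.mem_image, Finset.mem_univ, true_and] at h
    obtain ⟨i, rfl⟩ := h
    rw [Pi.single_apply]
    split_ifs <;> linarith

theorem rootsC_last {n : ℕ} : ∀ α ∈ rootsC (n + 1), 0 ≤ α (Fin.last n) :=
  roots_single_last 2 two_pos

theorem kk_reduce (d : Bool) {n : ℕ} (R : Finset (Fin (n + 1) → ℚ)) (r : ℚ) (hr : 0 ≤ r)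
    (hnr : 0 < (n : ℚ) + r) (hR : ∀ α ∈ R, 0 ≤ α (Fin.last n)) (l : ℕ) :
    kk d R r l = ∑ σ : Equiv.Perm (Fin n), ∑ ε : Fin n → Bool, cW d σ ε •
      cf (ZR R) (Fin.snoc (wAct σ ε (rr n r) - rr n r) (l : ℚ)) := by
  rw [kk, FW_xm]
  refine weyl_reduce d r hr hnr l (cf (ZR R)) ?_
  intro v hv
  rw [← kostantQ_eq_cf]
  exact kostantQ_neg R v _ hR hv

theorem gg_eq (d : Bool) {n : ℕ} (R : Finset (Fin n → ℚ)) (r : ℚ) (H : PowerSeries (GA n))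
    (hH : ∀ τ δ, PowerSeries.map (wA τ δ) H = H) (l : ℕ) :
    gg d R r H l = ∑ σ : Equiv.Perm (Fin n), ∑ ε : Fin n → Bool,
      cW d σ ε • cf (ZR R * PowerSeries.C (PowerSeries.coeff l H))
        (wAct σ ε (rr n r) - rr n r) := by
  rw [gg, FW_inv]
  intro σ ε
  rw [← PowerSeries.coeff_map, hH]

theorem kk_branch (d : Bool) {n : ℕ} (R : Finset (Fin (n + 1) → ℚ)) (R' : Finset (Fin n → ℚ))
    (r : ℚ) (hr : 0 ≤ r) (hnr : 0 < (n : ℚ) + r) (hR : ∀ α ∈ R, 0 ≤ α (Fin.last n))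
    (H : PowerSeries (GA n)) (hH : ∀ τ δ, PowerSeries.map (wA τ δ) H = H)
    (hZ : ZR R = PowerSeries.map (jA n) (ZR R') * th H) (l : ℕ) :
    kk d R r l = PowerSeries.X ^ l * gg d R' r H l := by
  rw [kk_reduce d R r hr hnr hR, gg_eq d R' r H hH, Finset.mul_sum]
  refine Finset.sum_congr rfl fun σ _ => ?_
  rw [Finset.mul_sum]
  refine Finset.sum_congr rfl fun ε _ => ?_
  rw [hZ, cf_branch, mul_smul_comm]

theorem HHg_inv {n : ℕ} (τ : Equiv.Perm (Fin n)) (δ : Fin n → Bool) :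
    PowerSeries.map (wA τ δ) (HH n * geo 1) = HH n * geo 1 := by
  rw [map_mul, HH_inv, map_geo, map_one]

theorem branch_B (n l : ℕ) : kk false (rootsB (n + 1)) (1 / 2) l =
    PowerSeries.X ^ l * gg false (rootsB n) (1 / 2) (HH n * geo 1) l :=
  kk_branch false _ _ _ (by norm_num) (by positivity) (roots_single_last 1 one_pos) _ HHg_inv
    ZR_B l

theorem branch_D (n l : ℕ) : kk true (rootsD (n + 2)) 0 l =
    PowerSeries.X ^ l * gg true (rootsD (n + 1)) 0 (HH (n + 1)) l :=
  kk_branch true _ _ _ le_rfl (by push_cast; positivity) rootsD_last _ HH_inv ZR_D l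

theorem cf_C {n : ℕ} (β : Fin n → ℚ) (l : ℕ) :
    cf (ZR (rootsC (n + 1))) (Fin.snoc β (l : ℚ)) =
      PowerSeries.X * cf (ZR (rootsC (n + 1))) (Fin.snoc β ((l : ℚ) - 2)) +
      PowerSeries.X ^ l * cf (ZR (rootsC n) * PowerSeries.C (PowerSeries.coeff l (HH n))) β := by
  have h := cf_lin (ZR (rootsC (n + 1))) (Pi.single (Fin.last n) 2) (Fin.snoc β (l : ℚ))
  have h1 : ZR (rootsC (n + 1)) * lin (xm (-Pi.single (Fin.last n) 2)) =
      PowerSeries.map (jA n) (ZR (rootsC n)) * th (HH n) := by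
    rw [ZR_C, mul_assoc, mul_comm (geo _), lin_mul_geo, mul_one]
  rw [h1, cf_branch] at h
  have h2 : (Fin.snoc β (l : ℚ) : Fin (n + 1) → ℚ) - Pi.single (Fin.last n) 2 =
      Fin.snoc β ((l : ℚ) - 2) := by
    ext i
    refine Fin.lastCases ?_ (fun i => ?_) i
    · simp
    · simp
  rw [h2] at h
  rw [h]; ring

theorem branch_C_zero (n : ℕ) : kk false (rootsC (n + 1)) 1 0 =
    gg false (rootsC n) 1 (HH n) 0 := by
  rw [kk_reduce false _ 1 (by norm_num) (by positivity) rootsC_last,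
    gg_eq false _ 1 _ HH_inv]
  refine Finset.sum_congr rfl fun σ _ => Finset.sum_congr rfl fun ε _ => ?_
  rw [cf_C, ← kostantQ_eq_cf, kostantQ_neg _ _ (Fin.last n) rootsC_last]
  · simp
  · simp

theorem branch_C_succ (n l : ℕ) : kk false (rootsC (n + 1)) 1 (l + 2) =
    PowerSeries.X * kk false (rootsC (n + 1)) 1 l +
    PowerSeries.X ^ (l + 2) * gg false (rootsC n) 1 (HH n) (l + 2) := by
  rw [kk_reduce false _ 1 (by norm_num) (by positivity) rootsC_last,
    kk_reduce false _ 1 (by norm_num) (by positivity) rootsC_last,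
    gg_eq false _ 1 _ HH_inv, Finset.mul_sum, Finset.mul_sum, ← Finset.sum_add_distrib]
  refine Finset.sum_congr rfl fun σ _ => ?_
  rw [Finset.mul_sum, Finset.mul_sum, ← Finset.sum_add_distrib]
  refine Finset.sum_congr rfl fun ε _ => ?_
  rw [cf_C, mul_smul_comm, mul_smul_comm, ← smul_add]
  congr 6
  push_cast; ring

/-! ### Recursions -/

theorem symc_C (n l : ℕ) : kk false (rootsC (n + 1)) 1 l =
    gg false (rootsC (n + 1)) 1 (HH (n + 1)) l := by
  rw [← coeff_LW_geo, sym_C, coeff_LW_H]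

theorem symc_B (n l : ℕ) : kk false (rootsB (n + 1)) (1 / 2) (l + 2) =
    gg false (rootsB (n + 1)) (1 / 2) (HH (n + 1) * geo 1) (l + 2) -
      gg false (rootsB (n + 1)) (1 / 2) (HH (n + 1) * geo 1) l := by
  rw [← coeff_LW_geo, sym_B, coeff_one_sub, coeff_LW_H, coeff_LW_H]

theorem symc_B_zero (n : ℕ) : kk false (rootsB (n + 1)) (1 / 2) 0 =
    gg false (rootsB (n + 1)) (1 / 2) (HH (n + 1) * geo 1) 0 := by
  rw [← coeff_LW_geo, sym_B, coeff_one_sub_zero, coeff_LW_H]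

theorem symc_D (n l : ℕ) : kk true (rootsD (n + 2)) 0 (l + 2) =
    gg true (rootsD (n + 2)) 0 (HH (n + 2)) (l + 2) -
      gg true (rootsD (n + 2)) 0 (HH (n + 2)) l := by
  rw [← coeff_LW_geo, sym_D, coeff_one_sub, coeff_LW_H, coeff_LW_H]

theorem symc_D_zero (n : ℕ) : kk true (rootsD (n + 2)) 0 0 =
    gg true (rootsD (n + 2)) 0 (HH (n + 2)) 0 := by
  rw [← coeff_LW_geo, sym_D, coeff_one_sub_zero, coeff_LW_H]

theorem rec_B (n l : ℕ) : kk false (rootsB (n + 2)) (1 / 2) (l + 2) =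
    PowerSeries.X ^ 2 * kk false (rootsB (n + 2)) (1 / 2) l +
    PowerSeries.X ^ (l + 2) * kk false (rootsB (n + 1)) (1 / 2) (l + 2) := by
  rw [branch_B (n + 1), branch_B (n + 1), symc_B]
  ring

theorem rec_B_zero (n : ℕ) : kk false (rootsB (n + 2)) (1 / 2) 0 =
    kk false (rootsB (n + 1)) (1 / 2) 0 := by
  rw [branch_B (n + 1), symc_B_zero, pow_zero, one_mul]

theorem rec_D (n l : ℕ) : kk true (rootsD (n + 3)) 0 (l + 2) =
    PowerSeries.X ^ 2 * kk true (rootsD (n + 3)) 0 l +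
    PowerSeries.X ^ (l + 2) * kk true (rootsD (n + 2)) 0 (l + 2) := by
  rw [branch_D (n + 1), branch_D (n + 1), symc_D]
  ring

theorem rec_D_zero (n : ℕ) : kk true (rootsD (n + 3)) 0 0 = kk true (rootsD (n + 2)) 0 0 := by
  rw [branch_D (n + 1), symc_D_zero, pow_zero, one_mul]

theorem rec_C (n l : ℕ) : kk false (rootsC (n + 2)) 1 (l + 2) =
    PowerSeries.X * kk false (rootsC (n + 2)) 1 l +
    PowerSeries.X ^ (l + 2) * kk false (rootsC (n + 1)) 1 (l + 2) := by
  rw [branch_C_succ (n + 1), symc_C n]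

theorem rec_C_zero (n : ℕ) : kk false (rootsC (n + 2)) 1 0 = kk false (rootsC (n + 1)) 1 0 := by
  rw [branch_C_zero (n + 1), symc_C n]

/-! ### Base cases -/

theorem ZR_empty {n : ℕ} : ZR (∅ : Finset (Fin n → ℚ)) = 1 := by simp [ZR]

theorem rootsD_zero : rootsD 0 = ∅ := by
  rw [Finset.eq_empty_iff_forall_notMem]
  intro α h
  obtain ⟨i, _⟩ := mem_rootsD h
  exact i.elim0

theorem rootsB_zero : rootsB 0 = ∅ := by simp [rootsB, rootsD_zero]

theorem rootsC_zero : rootsC 0 = ∅ := by simp [rootsC, rootsD_zero]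

theorem rootsD_one : rootsD 1 = ∅ := by
  rw [Finset.eq_empty_iff_forall_notMem]
  intro α h
  obtain ⟨i, j, hij, _⟩ := mem_rootsD h
  omega

theorem FW_rank_zero (r : ℚ) (u : GA 0) :
    FW false 1 (rr 0 r) u = PowerSeries.C (u.coeff 0) := by
  have hw : ∀ σ ε, wA (n := 0) σ ε u = u := by
    intro σ ε
    have : wHom (n := 0) σ ε = AddMonoidHom.id _ := by
      refine AddMonoidHom.ext fun v => ?_
      exact Subsingleton.elim _ _
    rw [wA, this]
    simp
  have hx : xm (-rr 0 r) = 1 := by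
    rw [← xm_zero]; congr 1; exact Subsingleton.elim _ _
  simp only [FW, hw, hx, mul_one]
  simp only [Finset.univ_unique, Finset.sum_singleton]
  have hc : ∀ σ ε, cW (n := 0) false σ ε = 1 := by
    intro σ ε
    simp [cW, wDet, Subsingleton.elim σ 1]
  rw [hc, one_smul]
  ext k
  rw [PowerSeries.coeff_mk, PowerSeries.coeff_one, PowerSeries.coeff_C]
  split_ifs <;> simp

theorem HH_rank_zero : HH 0 = 1 := by simp [HH]

theorem xm_rank_zero (v : Fin 0 → ℚ) : xm v = 1 := by
  rw [← xm_zero]; congr 1; exact Subsingleton.elim _ _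

theorem coeff_one_zero {n : ℕ} : (1 : GA n).coeff 0 = 1 := by
  rw [← xm_zero, coeff_xm, if_pos rfl]

theorem base_kB (l : ℕ) : kk false (rootsB 1) (1 / 2) l = PowerSeries.X ^ l := by
  rw [branch_B 0, gg, rootsB_zero, ZR_empty, FW_rank_zero, HH_rank_zero, one_mul, coeff_geo,
    one_pow, one_mul, xm_rank_zero, coeff_one_zero, map_one, mul_one]

theorem base_kC_zero : kk false (rootsC 1) 1 0 = 1 := by
  rw [branch_C_zero 0, gg, rootsC_zero, ZR_empty, FW_rank_zero, HH_rank_zero,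
    PowerSeries.coeff_one, if_pos rfl, one_mul, xm_rank_zero, coeff_one_zero, map_one]

theorem base_kC_succ (l : ℕ) : kk false (rootsC 1) 1 (l + 2) =
    PowerSeries.X * kk false (rootsC 1) 1 l := by
  rw [branch_C_succ 0, gg, rootsC_zero, ZR_empty, FW_rank_zero]
  simp [HH, PowerSeries.coeff_one]

theorem FW_rank_one (u : GA 1) :
    FW true 1 0 u = PowerSeries.C (u.coeff 0) := by
  have hw : wA (n := 1) 1 (fun _ => false) u = u := by
    have : wHom (n := 1) 1 (fun _ => false) = AddMonoidHom.id _ := by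
      refine AddMonoidHom.ext fun v => ?_
      ext i
      simp [wHom, wAct]
    rw [wA, this]
    simp
  rw [FW, Fintype.sum_subsingleton _ (1 : Equiv.Perm (Fin 1)),
    Finset.sum_eq_single (fun _ => false)]
  · have hc : cW (n := 1) true 1 (fun _ => false) = 1 := by
      simp [cW, wDet, sp]
    rw [hc, one_smul, hw, neg_zero, xm_zero]
    ext k
    rw [PowerSeries.coeff_mk, PowerSeries.coeff_one, PowerSeries.coeff_C]
    split_ifs <;> simp
  · intro ε _ hε
    have h0 : ε 0 = true := by
      by_contra e
      apply hε
      ext i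
      rw [Subsingleton.elim i 0]
      simpa using e
    have : cW (n := 1) true 1 ε = 0 := by
      simp [cW, sp, h0]
    rw [this, zero_smul]
  · intro h; exact absurd (Finset.mem_univ _) h

theorem coeff_HH_one (k : ℕ) : (PowerSeries.coeff (2 * k) (HH 1)).coeff 0 = 1 := by
  rw [HH, Fin.prod_univ_one, PowerSeries.coeff_mul, coeff_sum']
  have h1 : ∀ p ∈ Finset.HasAntidiagonal.antidiagonal (2 * k),
      (PowerSeries.coeff p.1 (geo (xm (ee (0 : Fin 1)))) *
        PowerSeries.coeff p.2 (geo (xm (-ee (0 : Fin 1))))).coeff 0 =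
      if p = (k, k) then 1 else 0 := by
    rintro ⟨a, b⟩ hp
    rw [Finset.HasAntidiagonal.mem_antidiagonal] at hp
    simp only at hp
    rw [coeff_geo, coeff_geo, ← xm_nsmul, ← xm_nsmul, ← xm_add, coeff_xm]
    congr 1
    rw [eq_iff_iff]
    constructor
    · intro h
      have h0 := congrFun h 0
      simp [ee_apply] at h0
      have : (a : ℚ) = b := by linarith
      have : a = b := by exact_mod_cast this
      rw [Prod.mk.injEq]; omega
    · intro h
      rw [Prod.mk.injEq] at h
      rw [h.1, h.2]; simp
  rw [Finset.sum_congr rfl h1, Finset.sum_ite_eq', if_pos]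
  rw [Finset.HasAntidiagonal.mem_antidiagonal]; omega

theorem base_kD (k : ℕ) : kk true (rootsD 2) 0 (2 * k) = PowerSeries.X ^ (2 * k) := by
  have h : rr 1 0 = 0 := by
    ext i; simp [rr]
  rw [branch_D 0, gg, zero_add, rootsD_one, ZR_empty, h, FW_rank_one, xm_zero, mul_one,
    coeff_HH_one, map_one, mul_one]

/-! ### Main comparison -/

theorem main_BC (n k : ℕ) : kk false (rootsB (n + 1)) (1 / 2) (2 * k) =
    PowerSeries.X ^ k * kk false (rootsC (n + 1)) 1 (2 * k) := by
  induction n generalizing k with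
  | zero =>
    have h : ∀ k, kk false (rootsC 1) 1 (2 * k) = PowerSeries.X ^ k := by
      intro k
      induction k with
      | zero => rw [pow_zero]; exact base_kC_zero
      | succ k ih => rw [show 2 * (k + 1) = 2 * k + 2 by ring, base_kC_succ, ih, pow_succ']
    have hB := base_kB (2 * k)
    have hC := h k
    have hBC : kk false (rootsB 1) (1 / 2) (2 * k) =
        PowerSeries.X ^ k * kk false (rootsC 1) 1 (2 * k) := by
      rw [hB, hC]; ring
    exact hBC
  | succ n ihn =>
    induction k with
    | zero =>
      have := ihn 0
      rw [mul_zero] at this ⊢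
      rw [rec_B_zero, rec_C_zero, this]
    | succ k ih =>
      have := ihn (k + 1)
      rw [show 2 * (k + 1) = 2 * k + 2 by ring] at this ⊢
      rw [rec_B, rec_C, this, ih]
      ring

theorem main_DB (n k : ℕ) : kk true (rootsD (n + 2)) 0 (2 * k) =
    kk false (rootsB (n + 1)) (1 / 2) (2 * k) := by
  induction n generalizing k with
  | zero => exact (base_kD k).trans (base_kB (2 * k)).symm
  | succ n ihn =>
    induction k with
    | zero =>
      have := ihn 0
      rw [mul_zero] at this ⊢
      rw [rec_B_zero, rec_D_zero, this]
    | succ k ih =>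
      have := ihn (k + 1)
      rw [show 2 * (k + 1) = 2 * k + 2 by ring] at this ⊢
      rw [rec_B, rec_D, this, ih]

theorem row_eq (n l : ℕ) (ρ : Fin (n + 1) → ℚ) :
    (fun i : Fin (n + 1) => if (i : ℕ) = n then (l : ℚ) else 0) + ρ =
      ρ + l • ee (Fin.last n) := by
  ext i
  have : i = Fin.last n ↔ (i : ℕ) = n := by rw [Fin.ext_iff]; rfl
  simp only [Pi.add_apply, Pi.smul_apply, ee_apply, this]
  split_ifs <;> simp [add_comm]

theorem KB_eq (n l : ℕ) :
    KB (n + 1) (fun i => if (i : ℕ) = n then (l : ℚ) else 0) 0 =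
      kk false (rootsB (n + 1)) (1 / 2) l := by
  have hρ : rhoB (n + 1) = rr (n + 1) (1 / 2) := rfl
  rw [KB, kk, FW_xm]
  simp only [kostantQ_eq_cf, zero_add, hρ, row_eq]
  refine Finset.sum_congr rfl fun σ _ => Finset.sum_congr rfl fun ε _ => ?_
  simp [cW]

theorem KC_eq (n l : ℕ) :
    KC (n + 1) (fun i => if (i : ℕ) = n then (l : ℚ) else 0) 0 =
      kk false (rootsC (n + 1)) 1 l := by
  have hρ : rhoC (n + 1) = rr (n + 1) 1 := rfl
  rw [KC, kk, FW_xm]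
  simp only [kostantQ_eq_cf, zero_add, hρ, row_eq]
  refine Finset.sum_congr rfl fun σ _ => Finset.sum_congr rfl fun ε _ => ?_
  simp [cW]

theorem KD_eq (n l : ℕ) :
    KD (n + 1) (fun i => if (i : ℕ) = n then (l : ℚ) else 0) 0 =
      kk true (rootsD (n + 1)) 0 l := by
  have hρ : rhoD (n + 1) = rr (n + 1) 0 := by ext i; simp [rhoD, rr]
  rw [KD, kk, FW_xm]
  simp only [kostantQ_eq_cf, zero_add, hρ, row_eq]
  refine Finset.sum_congr rfl fun σ _ => Finset.sum_congr rfl fun ε _ => ?_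
  change (if sp ε = 1 then _ else _) = _
  rw [cW]
  by_cases h : sp ε = 1 <;> simp [h]

/-- For even `l`:
`K^{B_n}_{(l),0} = q^{l/2} K^{C_n}_{(l),0}` for `n ≥ 1`, and
`K^{D_n}_{(l),0} = K^{B_{n-1}}_{(l),0} = q^{l/2} K^{C_{n-1}}_{(l),0}` for `n ≥ 2`. -/
theorem K_row_even (l : ℕ) (hl : Even l) :
    (∀ n : ℕ, 1 ≤ n →
      KB n (fun i => if (i : ℕ) = n - 1 then (l : ℚ) else 0) 0 =
        (PowerSeries.X : PowerSeries ℤ) ^ (l / 2) *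
          KC n (fun i => if (i : ℕ) = n - 1 then (l : ℚ) else 0) 0) ∧
    (∀ n : ℕ, 2 ≤ n →
      KD n (fun i => if (i : ℕ) = n - 1 then (l : ℚ) else 0) 0 =
        KB (n - 1) (fun i => if (i : ℕ) = n - 2 then (l : ℚ) else 0) 0 ∧
      KD n (fun i => if (i : ℕ) = n - 1 then (l : ℚ) else 0) 0 =
        (PowerSeries.X : PowerSeries ℤ) ^ (l / 2) *
          KC (n - 1) (fun i => if (i : ℕ) = n - 2 then (l : ℚ) else 0) 0) := by
  obtain ⟨k, rfl⟩ := hl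
  have hk : k + k = 2 * k := by ring
  have hk2 : 2 * k / 2 = k := by omega
  rw [hk, hk2]
  constructor
  · rintro n hn
    obtain ⟨m, rfl⟩ : ∃ m, n = m + 1 := ⟨n - 1, by omega⟩
    have h1 := KB_eq m (2 * k)
    have h2 := KC_eq m (2 * k)
    have h3 := main_BC m k
    rw [← h1, ← h2] at h3
    exact h3
  · rintro n hn
    obtain ⟨m, rfl⟩ : ∃ m, n = m + 2 := ⟨n - 2, by omega⟩
    have h1 := KB_eq m (2 * k)
    have h2 := KC_eq m (2 * k)
    have h4 := KD_eq (m + 1) (2 * k)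
    have h3 := main_BC m k
    have h5 := main_DB m k
    rw [← h1, ← h2] at h3
    rw [← h1, ← h4] at h5
    exact ⟨h5, h5.trans h3⟩
end

section
/- Let λ = (λ_2, λ_1) ∈ ℤ² with λ_2 ≥ λ_1 ≥ 0. Then the Kostka–Foulkes polynomial of type C_2 with second weight zero satisfies: (a) if λ_2 and λ_1 are both even, K^{C_2}_{λ,0}(q) = q^{(λ_2+λ_1)/2} · ( (q^{λ_1+2} − 1)/(q² − 1) + q² · ((q^{λ_1+1} − 1)/(q − 1)) · ((q^{λ_2−λ_1} − 1)/(q² − 1)) ); (b) if λ_2 and λ_1 are both odd, K^{C_2}_{λ,0}(q) = q^{(λ_2+λ_1)/2 + 1} · ( (q^{λ_1+1} − 1)/(q² − 1) + q · ((q^{λ_1+1} − 1)/(q − 1)) · ((q^{λ_2−λ_1} − 1)/(q² − 1)) ); (c) if λ_2 and λ_1 have different parities, K^{C_2}_{λ,0}(q) = 0. (In cases (a) and (b) every displayed quotient is a polynomial: (q^{2a} − 1)/(q² − 1) = 1 + q² + … + q^{2a−2} and (q^{a} − 1)/(q − 1) = 1 + q + … + q^{a−1}.) -/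
open scoped BigOperators

/-- The four positive roots of type `C_2`. -/
def c2v : Fin 4 → (Fin 2 → ℚ) := ![![-1, 1], ![1, 1], ![2, 0], ![0, 2]]

lemma rootsC_two : ∀ α, α ∈ rootsC 2 ↔ ∃ i, c2v i = α := by
  have h : (Finset.univ : Finset (Fin 2 × Fin 2)).filter (fun p => p.2 < p.1) = {(1, 0)} := by
    decide
  have e1 : (Pi.single 1 1 - Pi.single 0 1 : Fin 2 → ℚ) = ![-1, 1] := by
    ext i; fin_cases i <;> simp
  have e2 : (Pi.single 1 1 + Pi.single 0 1 : Fin 2 → ℚ) = ![1, 1] := by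
    ext i; fin_cases i <;> simp
  have e3 : (Pi.single 0 2 : Fin 2 → ℚ) = ![2, 0] := by
    ext i; fin_cases i <;> simp
  have e4 : (Pi.single 1 2 : Fin 2 → ℚ) = ![0, 2] := by
    ext i; fin_cases i <;> simp
  intro α
  simp only [rootsC, rootsD, h, Finset.image_singleton, Finset.mem_union, Finset.mem_singleton,
    Finset.mem_image, Finset.mem_univ, true_and, Fin.exists_fin_two, e1, e2, e3, e4]
  simp only [Fin.exists_fin_succ, c2v]
  simp [eq_comm, or_assoc]

lemma c2v_inj : Function.Injective c2v := by
  intro i j h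
  have h0 := congrFun h 0
  fin_cases i <;> fin_cases j <;> first | rfl | (exfalso; revert h0; norm_num [c2v])

/-- Indexing of the positive roots. -/
noncomputable def c2e : Fin 4 ≃ {α // α ∈ rootsC 2} :=
  Equiv.ofBijective (fun i => ⟨c2v i, (rootsC_two _).2 ⟨i, rfl⟩⟩)
    ⟨fun i j h => c2v_inj (congrArg Subtype.val h), fun ⟨α, hα⟩ => by
      obtain ⟨i, rfl⟩ := (rootsC_two _).1 hα
      exact ⟨i, rfl⟩⟩

/-- Closed form for the coefficients of the partition function. -/
def c2cnt (x y k : ℤ) : ℤ :=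
  if (x + y) % 2 = 0 ∧ x + y ≤ 2 * k then
    max 0 ((y - (k - (x + y) / 2)) / 2 + 1 - max 0 ((y - x) / 2 - (k - (x + y) / 2)))
  else 0

lemma coeff_kostant (x y : ℤ) (k : ℕ) :
    PowerSeries.coeff k (kostantQ (rootsC 2) ![(x : ℚ), (y : ℚ)]) = c2cnt x y k := by
  have key : ∀ m : Fin 4 → ℕ,
      ((∑ α, (c2e.arrowCongr (Equiv.refl ℕ) m) α) = k ∧
        (∑ α, ((c2e.arrowCongr (Equiv.refl ℕ) m) α : ℚ) • (α : Fin 2 → ℚ)) =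
          ![(x : ℚ), (y : ℚ)]) ↔
      (m 0 + m 1 + m 2 + m 3 = k ∧ -(m 0 : ℤ) + m 1 + 2 * m 2 = x ∧
        (m 0 : ℤ) + m 1 + 2 * m 3 = y) := by
    intro m
    rw [← Equiv.sum_comp c2e, ← Equiv.sum_comp c2e]
    simp only [Fin.sum_univ_four, Equiv.arrowCongr_apply, Function.comp, Equiv.symm_apply_apply,
      Equiv.refl_apply]
    have hv : ∀ i, ((c2e i : {α // α ∈ rootsC 2}) : Fin 2 → ℚ) = c2v i := fun _ => rfl
    simp only [hv]
    refine and_congr Iff.rfl ?_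
    rw [funext_iff, Fin.forall_fin_two]
    simp only [c2v, Pi.add_apply, Pi.smul_apply, smul_eq_mul]
    simp
    refine and_congr ?_ ?_
    · rw [← @Int.cast_inj ℚ]; push_cast; rw [mul_comm (2 : ℚ)]
    · rw [← @Int.cast_inj ℚ]; push_cast; rw [mul_comm (2 : ℚ)]
  rw [kostantQ, PowerSeries.coeff_mk,
    ← Nat.card_congr ((c2e.arrowCongr (Equiv.refl ℕ)).subtypeEquiv (fun m => (key m).symm))]
  unfold c2cnt
  split_ifs with h
  · have E : {m : Fin 4 → ℕ // m 0 + m 1 + m 2 + m 3 = k ∧ -(m 0 : ℤ) + m 1 + 2 * m 2 = x ∧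
        (m 0 : ℤ) + m 1 + 2 * m 3 = y} ≃
        Finset.Icc (max 0 ((y - x) / 2 - (k - (x + y) / 2))) ((y - (k - (x + y) / 2)) / 2) :=
      { toFun := fun m => ⟨m.1 3, by
          have := m.2
          rw [Finset.mem_Icc]; omega⟩
        invFun := fun z => ⟨![((k : ℤ) - (x + y) / 2).toNat,
            (y - ((k : ℤ) - (x + y) / 2) - 2 * z.1).toNat,
            (z.1 + ((k : ℤ) - (x + y) / 2) - (y - x) / 2).toNat, z.1.toNat], by
          have := z.2
          rw [Finset.mem_Icc] at this
          simp
          omega⟩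
        left_inv := fun m => by
          have := m.2
          ext i
          fin_cases i <;> simp <;> omega
        right_inv := fun z => by
          have := z.2
          rw [Finset.mem_Icc] at this
          ext
          simp
          omega }
    rw [Nat.card_congr E, Nat.card_eq_fintype_card, Fintype.card_coe, Int.card_Icc]
    omega
  · have : IsEmpty {m : Fin 4 → ℕ // m 0 + m 1 + m 2 + m 3 = k ∧ -(m 0 : ℤ) + m 1 + 2 * m 2 = x ∧
        (m 0 : ℤ) + m 1 + 2 * m 3 = y} := ⟨fun m => by
      have := m.2
      omega⟩
    simp

lemma coeff_KC (a b k : ℕ) (hba : b ≤ a) :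
    PowerSeries.coeff k (KC 2 ![(b : ℚ), (a : ℚ)] 0) =
      c2cnt b a k - c2cnt (-b - 2) a k - c2cnt (a + 1) (b - 1) k := by
  have hp : (Finset.univ : Finset (Equiv.Perm (Fin 2))) = {1, Equiv.swap 0 1} := by decide
  have hb : (Finset.univ : Finset (Fin 2 → Bool)) =
      {![false, false], ![true, false], ![false, true], ![true, true]} := by decide
  have hne : (1 : Equiv.Perm (Fin 2)) ≠ Equiv.swap 0 1 := by decide
  have hS : ∀ f : Equiv.Perm (Fin 2) → (Fin 2 → Bool) → PowerSeries ℤ,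
      ∑ σ, ∑ ε, f σ ε =
      (f 1 ![false, false] + (f 1 ![true, false] + (f 1 ![false, true] + f 1 ![true, true]))) +
      (f (Equiv.swap 0 1) ![false, false] + (f (Equiv.swap 0 1) ![true, false] +
        (f (Equiv.swap 0 1) ![false, true] + f (Equiv.swap 0 1) ![true, true]))) := by
    intro f
    have h2 : ∀ g : (Fin 2 → Bool) → PowerSeries ℤ, ∑ ε, g ε =
        g ![false, false] + (g ![true, false] + (g ![false, true] + g ![true, true])) := by
      intro g
      rw [hb, Finset.sum_insert (by decide), Finset.sum_insert (by decide),
        Finset.sum_insert (by decide), Finset.sum_singleton]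
    rw [hp, Finset.sum_pair hne, h2, h2]
  have hw : ∀ (σ : Equiv.Perm (Fin 2)) (e0 e1 : Bool) (x y : ℤ),
      (if e0 then -1 else 1) * (![(b : ℤ) + 1, (a : ℤ) + 2] (σ⁻¹ 0)) - 1 = x →
      (if e1 then -1 else 1) * (![(b : ℤ) + 1, (a : ℤ) + 2] (σ⁻¹ 1)) - 2 = y →
      wAct σ ![e0, e1] (![(b : ℚ), (a : ℚ)] + rhoC 2) - (0 + rhoC 2) = ![(x : ℚ), (y : ℚ)] := by
    intro σ e0 e1 x y hx hy
    have hl : ∀ i, (![(b : ℚ), (a : ℚ)] + rhoC 2) i = ((![(b : ℤ) + 1, (a : ℤ) + 2] i : ℤ) : ℚ) := by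
      intro i
      fin_cases i <;> simp [rhoC]
      ring
    subst hx hy
    ext i
    simp only [Pi.sub_apply, wAct, hl]
    fin_cases i <;> cases e0 <;> cases e1 <;> simp [rhoC] <;> norm_num
  unfold KC
  rw [hS,
    hw 1 false false b a (by simp) (by simp),
    hw 1 true false (-b - 2) a (by simp; ring) (by simp),
    hw 1 false true b (-a - 4) (by simp) (by simp; ring),
    hw 1 true true (-b - 2) (-a - 4) (by simp; ring) (by simp; ring),
    hw (Equiv.swap 0 1) false false (a + 1) (b - 1) (by simp; ring) (by simp; ring),
    hw (Equiv.swap 0 1) true false (-a - 3) (b - 1) (by simp; ring) (by simp; ring),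
    hw (Equiv.swap 0 1) false true (a + 1) (-b - 3) (by simp; ring) (by simp; ring),
    hw (Equiv.swap 0 1) true true (-a - 3) (-b - 3) (by simp; ring) (by simp; ring)]
  simp only [map_add, map_zsmul, coeff_kostant]
  have z1 : c2cnt b (-a - 4) k = 0 := by unfold c2cnt; split_ifs <;> omega
  have z2 : c2cnt (-b - 2) (-a - 4) k = 0 := by unfold c2cnt; split_ifs <;> omega
  have z3 : c2cnt (-a - 3) (b - 1) k = 0 := by unfold c2cnt; split_ifs <;> omega
  have z4 : c2cnt (a + 1) (-b - 3) k = 0 := by unfold c2cnt; split_ifs <;> omega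
  have z5 : c2cnt (-a - 3) (-b - 3) k = 0 := by unfold c2cnt; split_ifs <;> omega
  rw [z1, z2, z3, z4, z5]
  simp [wDet, Fin.prod_univ_two]
  ring

lemma coeff_even_geom (s n : ℕ) :
    PowerSeries.coeff n (∑ t ∈ Finset.range s, (PowerSeries.X : PowerSeries ℤ) ^ (2 * t)) =
      if n % 2 = 0 ∧ n < 2 * s then 1 else 0 := by
  simp only [map_sum, PowerSeries.coeff_X_pow]
  rw [Finset.sum_boole]
  split_ifs with h
  · have : (Finset.range s).filter (fun t => n = 2 * t) = {n / 2} := by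
      ext t; simp; omega
    simp [this]
  · have : (Finset.range s).filter (fun t => n = 2 * t) = ∅ := by
      ext t; simp; omega
    simp [this]

lemma coeff_prod_geom (b d n : ℕ) :
    PowerSeries.coeff n ((∑ t ∈ Finset.range (b + 1), (PowerSeries.X : PowerSeries ℤ) ^ t) *
      (∑ t ∈ Finset.range d, (PowerSeries.X : PowerSeries ℤ) ^ (2 * t))) =
      max 0 (min ((d : ℤ) - 1) (n / 2) - max 0 (((n : ℤ) - b + 1) / 2) + 1) := by
  rw [Finset.mul_sum]
  simp only [map_sum, PowerSeries.coeff_mul_X_pow', PowerSeries.coeff_X_pow]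
  have : ∀ u ∈ Finset.range d, (if 2 * u ≤ n then
      ∑ t ∈ Finset.range (b + 1), (if n - 2 * u = t then (1 : ℤ) else 0) else 0) =
      if (2 * u ≤ n ∧ n - 2 * u < b + 1) then 1 else 0 := by
    intro u _
    rw [Finset.sum_ite_eq, ite_and]
    simp only [Finset.mem_range]
  rw [Finset.sum_congr rfl this, Finset.sum_boole]
  have : (Finset.range d).filter (fun u => 2 * u ≤ n ∧ n - 2 * u < b + 1) =
      Finset.Ico ((n + 1 - b) / 2) (min d (n / 2 + 1)) := by
    ext u; simp; omega
  rw [this, Nat.card_Ico]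
  omega


lemma c2cnt_eq (x y k s j h : ℤ) (hs : x + y = 2 * s) (hk : k = s + j) (hj : 0 ≤ j)
    (hh : y - j = 2 * h ∨ y - j = 2 * h + 1) :
    c2cnt x y k = max 0 (h + 1 - max 0 (y - s - j)) := by
  unfold c2cnt
  rw [if_pos (by omega)]
  have e1 : (x + y) / 2 = s := by omega
  have e2 : (y - x) / 2 = y - s := by omega
  have e3 : (y - (k - s)) / 2 = h := by omega
  have e4 : k - s = j := by omega
  rw [e1, e2, e3, e4]

lemma c2cnt_small (x y k : ℤ) (hk : 2 * k < x + y) : c2cnt x y k = 0 := by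
  unfold c2cnt
  rw [if_neg (by omega)]

lemma geom_eval (b d n m h : ℤ) (hm : n = 2 * m ∨ n = 2 * m + 1)
    (hh : n - b + 1 = 2 * h ∨ n - b + 1 = 2 * h + 1) :
    max 0 (min (d - 1) (n / 2) - max 0 ((n - b + 1) / 2) + 1) =
      max 0 (min (d - 1) m - max 0 h + 1) := by
  have e1 : n / 2 = m := by omega
  have e2 : (n - b + 1) / 2 = h := by omega
  rw [e1, e2]

lemma num_even (b d j : ℤ) (hb : 0 ≤ b) (hd : 0 ≤ d) (hj : 0 ≤ j) :
    c2cnt (2 * b + 0) (2 * (b + d) + 0) (2 * b + d + 0 + j) - c2cnt (-(2 * b + 0) - 2) (2 * (b + d) + 0) (2 * b + d + 0 + j) -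
      c2cnt (2 * (b + d) + 0 + 1) (2 * b + 0 - 1) (2 * b + d + 0 + j) =
      (if j % 2 = 0 ∧ j < 2 * (b + 1) then 1 else 0) +
        (if 2 ≤ j then max 0 (min (d - 1) ((j - 2) / 2) - max 0 ((j - 2 - 2 * b + 1) / 2) + 1) else 0) := by
  have hp : ∃ p, j = 2 * p ∨ j = 2 * p + 1 := ⟨j / 2, by omega⟩
  obtain ⟨p, rfl | rfl⟩ := hp
  · rw [c2cnt_eq _ _ _ (2 * b + d + 0) (2 * p) (b + d - p + (0)) (by ring) rfl hj (by omega),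
      c2cnt_eq _ _ _ (d - 1) (2 * b + 1 + 0 + (2 * p)) (d - p + (-1)) (by ring) (by ring)
        (by omega) (by omega),
      c2cnt_eq _ _ _ (2 * b + d + 0) (2 * p) (b - p + (-1)) (by ring) rfl hj (by omega),
      geom_eval (2 * b) d (2 * p - 2) (p - 1) (p - b + (-1)) (by omega) (by omega)]
    rcases le_total (d - (2 * p)) 0 with h1 | h1 <;> rcases le_or_gt p b with h2 | h2 <;>
      rcases le_or_gt p d with h3 | h3 <;> split_ifs <;> omega
  · rw [c2cnt_eq _ _ _ (2 * b + d + 0) (2 * p + 1) (b + d - p + (-1)) (by ring) rfl hj (by omega),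
      c2cnt_eq _ _ _ (d - 1) (2 * b + 1 + 0 + (2 * p + 1)) (d - p + (-1)) (by ring) (by ring)
        (by omega) (by omega),
      c2cnt_eq _ _ _ (2 * b + d + 0) (2 * p + 1) (b - p + (-1)) (by ring) rfl hj (by omega),
      geom_eval (2 * b) d (2 * p + 1 - 2) (p - 1) (p - b + (0)) (by omega) (by omega)]
    rcases le_total (d - (2 * p + 1)) 0 with h1 | h1 <;> rcases le_or_gt p b with h2 | h2 <;>
      rcases le_or_gt p d with h3 | h3 <;> split_ifs <;> omega

lemma num_odd (b d j : ℤ) (hb : 0 ≤ b) (hd : 0 ≤ d) (hj : 0 ≤ j) :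
    c2cnt (2 * b + 1) (2 * (b + d) + 1) (2 * b + d + 1 + j) - c2cnt (-(2 * b + 1) - 2) (2 * (b + d) + 1) (2 * b + d + 1 + j) -
      c2cnt (2 * (b + d) + 1 + 1) (2 * b + 1 - 1) (2 * b + d + 1 + j) =
      (if 1 ≤ j ∧ (j - 1) % 2 = 0 ∧ j - 1 < 2 * (b + 1) then 1 else 0) +
        (if 2 ≤ j then max 0 (min (d - 1) ((j - 2) / 2) - max 0 ((j - 2 - (2 * b + 1) + 1) / 2) + 1) else 0) := by
  have hp : ∃ p, j = 2 * p ∨ j = 2 * p + 1 := ⟨j / 2, by omega⟩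
  obtain ⟨p, rfl | rfl⟩ := hp
  · rw [c2cnt_eq _ _ _ (2 * b + d + 1) (2 * p) (b + d - p + (0)) (by ring) rfl hj (by omega),
      c2cnt_eq _ _ _ (d - 1) (2 * b + 1 + 1 + (2 * p)) (d - p + (-1)) (by ring) (by ring)
        (by omega) (by omega),
      c2cnt_eq _ _ _ (2 * b + d + 1) (2 * p) (b - p + (0)) (by ring) rfl hj (by omega),
      geom_eval (2 * b + 1) d (2 * p - 2) (p - 1) (p - b + (-1)) (by omega) (by omega)]
    rcases le_total (d - (2 * p)) 0 with h1 | h1 <;> rcases le_or_gt p b with h2 | h2 <;>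
      rcases le_or_gt p d with h3 | h3 <;> split_ifs <;> omega
  · rw [c2cnt_eq _ _ _ (2 * b + d + 1) (2 * p + 1) (b + d - p + (0)) (by ring) rfl hj (by omega),
      c2cnt_eq _ _ _ (d - 1) (2 * b + 1 + 1 + (2 * p + 1)) (d - p + (-1)) (by ring) (by ring)
        (by omega) (by omega),
      c2cnt_eq _ _ _ (2 * b + d + 1) (2 * p + 1) (b - p + (-1)) (by ring) rfl hj (by omega),
      geom_eval (2 * b + 1) d (2 * p + 1 - 2) (p - 1) (p - b + (-1)) (by omega) (by omega)]
    rcases le_total (d - (2 * p + 1)) 0 with h1 | h1 <;> rcases le_or_gt p b with h2 | h2 <;>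
      rcases le_or_gt p d with h3 | h3 <;> split_ifs <;> omega

lemma num_neg (b d j : ℤ) (o : ℤ) (ho : o = 0 ∨ o = 1) (hb : 0 ≤ b) (hd : 0 ≤ d) (hj : j < 0) :
    c2cnt (2 * b + o) (2 * (b + d) + o) (2 * b + d + o + j) -
      c2cnt (-(2 * b + o) - 2) (2 * (b + d) + o) (2 * b + d + o + j) -
      c2cnt (2 * (b + d) + o + 1) (2 * b + o - 1) (2 * b + d + o + j) = 0 := by
  rw [c2cnt_small (2 * b + o) _ _ (by omega),
    c2cnt_small (2 * (b + d) + o + 1) _ _ (by omega)]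
  rcases le_or_gt 0 (2 * b + 1 + o + j) with h | h
  · rw [c2cnt_eq _ _ _ (d - 1) (2 * b + 1 + o + j) ((2 * d - 1 - j) / 2) (by ring) (by ring) h
      (by omega)]
    omega
  · rw [c2cnt_small _ _ _ (by omega)]
    rfl

set_option maxHeartbeats 1000000 in
/-- Explicit formula for `K^{C_2}_{λ,0}(q)` where `λ = (a, b)`,
`a ≥ b ≥ 0` (here the weight is written with `e_1`-coordinate `b` and
`e_2`-coordinate `a`).  Geometric sums realize the polynomial quotients:
`(q^{2s} - 1)/(q² - 1) = ∑_{t<s} q^{2t}` and `(q^s - 1)/(q - 1) = ∑_{t<s} q^t`. -/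
theorem KC2_explicit (a b : ℕ) (hba : b ≤ a) :
    (Even a → Even b →
      KC 2 ![(b : ℚ), (a : ℚ)] 0 =
        (PowerSeries.X : PowerSeries ℤ) ^ ((a + b) / 2) *
          ((∑ t ∈ Finset.range (b / 2 + 1), (PowerSeries.X : PowerSeries ℤ) ^ (2 * t)) +
            (PowerSeries.X : PowerSeries ℤ) ^ 2 *
              (∑ t ∈ Finset.range (b + 1), (PowerSeries.X : PowerSeries ℤ) ^ t) *
              (∑ t ∈ Finset.range ((a - b) / 2), (PowerSeries.X : PowerSeries ℤ) ^ (2 * t)))) ∧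
    (Odd a → Odd b →
      KC 2 ![(b : ℚ), (a : ℚ)] 0 =
        (PowerSeries.X : PowerSeries ℤ) ^ ((a + b) / 2 + 1) *
          ((∑ t ∈ Finset.range ((b + 1) / 2), (PowerSeries.X : PowerSeries ℤ) ^ (2 * t)) +
            (PowerSeries.X : PowerSeries ℤ) *
              (∑ t ∈ Finset.range (b + 1), (PowerSeries.X : PowerSeries ℤ) ^ t) *
              (∑ t ∈ Finset.range ((a - b) / 2), (PowerSeries.X : PowerSeries ℤ) ^ (2 * t)))) ∧
    (¬ a % 2 = b % 2 → KC 2 ![(b : ℚ), (a : ℚ)] 0 = 0) := by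
  refine ⟨?_, ?_, ?_⟩
  · rintro ⟨a, rfl⟩ ⟨b, rfl⟩
    obtain ⟨d, rfl⟩ : ∃ d, a = b + d := ⟨a - b, by omega⟩
    ext k
    have i0 : b + d + (b + d) = 2 * (b + d) := by ring
    have i1 : (2 * (b + d) + (2 * b)) / 2 = 2 * b + d := by omega
    have i2 : (2 * b) / 2 = b := by omega
    have i3 : (2 * (b + d) - (2 * b)) / 2 = d := by omega
    rw [coeff_KC _ _ _ hba, i0, ← two_mul b, i1, i2, i3, PowerSeries.coeff_X_pow_mul', map_add,
      coeff_even_geom, mul_assoc, PowerSeries.coeff_X_pow_mul', coeff_prod_geom]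
    push_cast
    rcases le_or_gt (2 * b + d) k with hk | hk
    · obtain ⟨j, rfl⟩ := Nat.exists_eq_add_of_le hk
      have N := num_even b d j (by omega) (by omega) (by omega)
      simp only [add_zero] at N
      push_cast
      rw [N]
      have e : 2 * b + d + j - (2 * b + d) = j := by omega
      rw [e]
      rcases le_or_gt 2 j with h | h
      · have c : ((j - 2 : ℕ) : ℤ) = (j : ℤ) - 2 := by omega
        rw [c, if_pos (show 2 * b + d ≤ 2 * b + d + j by omega), if_pos h, if_pos (show (2 : ℤ) ≤ (j : ℤ) by omega)]
        congr 1
        split_ifs <;> omega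
      · split_ifs <;> omega
    · have N := num_neg b d ((k : ℤ) - (2 * b + d + 0)) 0 (by omega) (by omega) (by omega) (by omega)
      simp only [add_sub_cancel, add_zero] at N
      rw [N, if_neg (by omega)]
  · rintro ⟨a, rfl⟩ ⟨b, rfl⟩
    obtain ⟨d, rfl⟩ : ∃ d, a = b + d := ⟨a - b, by omega⟩
    ext k
    have i1 : (2 * (b + d) + 1 + (2 * b + 1)) / 2 + 1 = 2 * b + d + 2 := by omega
    have i2 : (2 * b + 1 + 1) / 2 = b + 1 := by omega
    have i3 : (2 * (b + d) + 1 - (2 * b + 1)) / 2 = d := by omega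
    rw [coeff_KC _ _ _ hba, i1, i2, i3, PowerSeries.coeff_X_pow_mul', map_add, coeff_even_geom,
      mul_assoc]
    nth_rewrite 1 [← pow_one (PowerSeries.X : PowerSeries ℤ)]
    rw [PowerSeries.coeff_X_pow_mul', coeff_prod_geom]
    push_cast
    rcases le_or_gt (2 * b + d + 1) k with hk | hk
    · obtain ⟨j, rfl⟩ := Nat.exists_eq_add_of_le hk
      have N := num_odd b d j (by omega) (by omega) (by omega)
      
      push_cast
      rw [N]
      have e : 2 * b + d + 1 + j - (2 * b + d + 2) = j - 1 := by omega
      rw [e]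
      rcases le_or_gt 2 j with h | h
      · have c : ((j - 1 - 1 : ℕ) : ℤ) = (j : ℤ) - 2 := by omega
        rw [c, if_pos (show 2 * b + d + 2 ≤ 2 * b + d + 1 + j by omega), if_pos (show 1 ≤ j - 1 by omega), if_pos (show (2 : ℤ) ≤ (j : ℤ) by omega)]
        congr 1
        split_ifs <;> omega
      · split_ifs <;> omega
    · have N := num_neg b d ((k : ℤ) - (2 * b + d + 1)) 1 (by omega) (by omega) (by omega) (by omega)
      simp only [add_sub_cancel, add_zero] at N
      rw [N, if_neg (by omega)]
  · intro h
    ext k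
    rw [coeff_KC _ _ _ hba]
    unfold c2cnt
    rw [if_neg (by omega), if_neg (by omega), if_neg (by omega)]
    simp
end
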